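/- arXiv:2306.15403 — 6 statements merged into one kernel-verified Lean document; each statement's English description precedes it below -/
import Mathlib

section
/- Let X, Y ⊆ ℝⁿ be compact sets and let h : X → Y be a homeomorphism (a continuous bijection from X onto Y whose inverse is also continuous, with respect to the subspace topologies). Then h maps the boundary of X (taken in ℝⁿ) onto the boundary of Y, i.e. h''(∂X) = ∂Y, and h maps the interior of X onto the interior of Y, i.e. h''(X°) = Y°. -/
/-!
The statement reduces to invariance of domain: for a continuous injective map `h` on `X`, every
interior point of `X` is sent to an interior point of `h '' X`. Applied to `h` and to its inverse
`g` this gives the claim about interiors, and the claim about frontiers follows by taking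
complements inside the closed sets `X` and `Y`.

Invariance of domain is derived from a form of Brouwer's theorem, `exists_zero_of_near_id`: a
continuous map of the closed unit ball into `E` that stays within `1 / 3` of the identity vanishes
somewhere. Let `f` be continuous and injective on the ball, and extend its inverse (Tietze) to a
continuous `G : E → E`. If `f 0` were not interior to the image, there would be a point `c` off the
image very close to `f 0`. Radial projection away from `c` pushes the image onto the union of its
part far from `c` and a small sphere around `c`. On the far part `G` is bounded away from zero, and
a `C¹` approximation of `G` can be shifted so that it has no zero on the small sphere either,
because the `C¹` image of a sphere is a null set. Precomposing with the
projection and `f` gives a nowhere vanishing map of the ball close to the identity, which contradicts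
the Brouwer statement (`mem_interior_image_unitBall`).

The Brouwer statement reduces to the absence of a `C¹` map `r` with values in the unit sphere and
fixing the sphere pointwise (`no_smooth_retraction`). That is shown by Milnor's and Rogers' volume
argument: for small `t > 0` the map `x ↦ x + t (r x - x)` is a diffeomorphism of the open unit ball,
so the integral over the ball of its Jacobian determinant, a polynomial in `t`, equals the volume of
the ball. Hence the polynomial is constant, but at `t = 1` it vanishes since `r` has singular
derivative everywhere.
-/

section

open Set Metric MeasureTheory Topology Polynomial

variable {E : Type*} [NormedAddCommGroup E] [InnerProductSpace ℝ E] [FiniteDimensional ℝ E]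

/-! ### The no-retraction theorem -/

/-- The function `t ↦ det (1 + t A)` is a polynomial of degree at most `dim E`, so its value at `1`
is a combination of its values at more than `dim E` nodes, with Lagrange weights independent of
`A`. -/
theorem exists_lagrange_det (A₀ : Finset ℝ) (hA : Module.finrank ℝ E < A₀.card) :
    ∃ w : ℝ → ℝ, ∑ t ∈ A₀, w t = 1 ∧ ∀ A : E →L[ℝ] E,
      ∑ t ∈ A₀, w t * (1 + t • A).det = (1 + A).det := by
  have key : ∀ p : ℝ[X], p.degree < A₀.card →
      ∑ t ∈ A₀, (Lagrange.basis A₀ id t).eval 1 * p.eval t = p.eval 1 := by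
    intro p hp
    conv_rhs => rw [Lagrange.eq_interpolate (s := A₀) (v := id) Function.injective_id.injOn hp]
    rw [Lagrange.interpolate_apply, eval_finsetSum]
    exact Finset.sum_congr rfl fun t _ => by simp [mul_comm]
  refine ⟨fun t => (Lagrange.basis A₀ id t).eval 1, ?_, fun A => ?_⟩
  · have := key 1 (by
      rw [degree_one]; exact_mod_cast (Nat.zero_le _).trans_lt hA)
    simpa using this
  · let b := Module.finBasis ℝ E
    let M := LinearMap.toMatrix b b (A : E →ₗ[ℝ] E)
    let p : ℝ[X] := ((X : ℝ[X]) • M.map C + (1 : Matrix _ _ ℝ).map C).det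
    have hdeg : p.natDegree ≤ Module.finrank ℝ E := by
      simpa only [Fintype.card_fin] using natDegree_det_X_add_C_le M 1
    have hev : ∀ t : ℝ, p.eval t = (1 + t • A).det := by
      intro t
      have h1 : (1 + t • A).det = LinearMap.det (1 + t • (A : E →ₗ[ℝ] E)) := rfl
      rw [h1, ← LinearMap.det_toMatrix b, ← coe_evalRingHom, RingHom.map_det]
      congr 1
      simp only [map_add, map_smul, LinearMap.toMatrix_one]
      ext i j
      simp only [RingHom.mapMatrix_apply, Matrix.map_apply, Matrix.add_apply, Matrix.smul_apply,
        smul_eq_mul, coe_evalRingHom, eval_mul, eval_X, eval_C]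
      simp [M, add_comm]
    have := key p (lt_of_le_of_lt degree_le_natDegree (by exact_mod_cast hdeg.trans_lt hA))
    simp only [hev] at this
    simpa using this

theorem det_eq_zero_of_range_ne_top {A : E →ₗ[ℝ] E} (h : LinearMap.range A ≠ ⊤) :
    LinearMap.det A = 0 := by
  by_contra hdet
  exact h (LinearMap.range_eq_top.2 (LinearMap.equivOfDetNeZero A hdet).surjective)

/-- For small `t > 0`, the homotopy from the identity to `r` restricts to a bijection of the open
unit ball with positive Jacobian determinant. -/
theorem image_homotopy (r : E → E) (hr : ContDiff ℝ 1 r) (h1 : ∀ x, ‖r x‖ = 1)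
    (hs : ∀ x, ‖x‖ = 1 → r x = x) :
    ∃ ε > (0 : ℝ), ε < 1 ∧ ∀ t : ℝ, 0 < t → t < ε →
      (∀ x ∈ ball (0 : E) 1, 0 < (1 + t • (fderiv ℝ r x - 1)).det) ∧
      InjOn (fun x => x + t • (r x - x)) (ball (0 : E) 1) ∧
      (fun x => x + t • (r x - x)) '' ball (0 : E) 1 = ball (0 : E) 1 := by
  have hcd : Continuous (fderiv ℝ r) := hr.continuous_fderiv one_ne_zero
  have hdr : Differentiable ℝ r := hr.differentiable one_ne_zero
  obtain ⟨C, hC⟩ := (isCompact_closedBall (0 : E) 1).exists_bound_of_continuousOn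
    (f := fun x => fderiv ℝ r x - 1) (hcd.sub continuous_const).continuousOn
  have hC0 : 0 ≤ C := (norm_nonneg _).trans (hC 0 (by simp))
  have hpos : ∀ᶠ A : E →L[ℝ] E in 𝓝 0, 0 < (1 + A).det := by
    have hc : Continuous fun A : E →L[ℝ] E => (1 + A).det :=
      ContinuousLinearMap.continuous_det.comp (continuous_const.add continuous_id)
    refine hc.continuousAt.eventually (lt_mem_nhds ?_)
    have : (1 + (0 : E →L[ℝ] E)).det = 1 := by
      rw [add_zero]; exact LinearMap.det_id
    simp only [this, one_pos]
  obtain ⟨η, hη, hball⟩ := Metric.eventually_nhds_iff.1 hpos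
  have hC1 : 0 < C + 1 := by linarith
  refine ⟨min (1 / 2) (min (η / (C + 1)) (1 / (C + 1))), by positivity,
    (min_le_left _ _).trans_lt (by norm_num), fun t ht htε => ?_⟩
  have ht1 : t < 1 := by
    have := (htε.trans_le (min_le_left _ _)); linarith
  have htη : t * (C + 1) < η := by
    rw [← lt_div_iff₀ hC1]; exact htε.trans_le ((min_le_right _ _).trans (min_le_left _ _))
  have htC : t * (C + 1) < 1 := by
    rw [← lt_div_iff₀ hC1]; exact htε.trans_le ((min_le_right _ _).trans (min_le_right _ _))
  have hdet : ∀ x ∈ ball (0 : E) 1, 0 < (1 + t • (fderiv ℝ r x - 1)).det := by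
    intro x hx
    apply hball
    rw [dist_zero_right, norm_smul, Real.norm_of_nonneg ht.le]
    nlinarith [hC x (ball_subset_closedBall hx)]
  have hinj : InjOn (fun x => x + t • (r x - x)) (ball (0 : E) 1) := by
    intro x hx y hy hxy
    have hmv : ‖(r y - y) - (r x - x)‖ ≤ C * ‖y - x‖ :=
      (convex_closedBall (0 : E) 1).norm_image_sub_le_of_norm_hasFDerivWithin_le
        (f := fun x => r x - x) (f' := fun x => fderiv ℝ r x - 1)
        (fun z _ => ((hdr z).hasFDerivAt.sub (hasFDerivAt_id z)).hasFDerivWithinAt)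
        hC (ball_subset_closedBall hx) (ball_subset_closedBall hy)
    have he : y - x = -(t • ((r y - y) - (r x - x))) := by
      have hxy' : x + t • (r x - x) = y + t • (r y - y) := hxy
      linear_combination (norm := module) (-1 : ℝ) • hxy'
    have hn : ‖y - x‖ ≤ t * (C * ‖y - x‖) := by
      conv_lhs => rw [he, norm_neg, norm_smul, Real.norm_of_nonneg ht.le]
      gcongr
    have : ‖y - x‖ = 0 := by nlinarith [norm_nonneg (y - x)]
    rw [norm_eq_zero, sub_eq_zero] at this
    exact this.symm
  refine ⟨hdet, hinj, ?_⟩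
  set f : E → E := fun x => x + t • (r x - x) with hf
  have hfc : Continuous f := by
    have := hdr.continuous
    fun_prop
  have hmaps : ∀ x, ‖x‖ < 1 → ‖f x‖ < 1 := by
    intro x hx
    have he : f x = (1 - t) • x + t • r x := by simp only [hf]; module
    rw [he]
    refine (norm_add_le _ _).trans_lt ?_
    rw [norm_smul, norm_smul, Real.norm_of_nonneg ht.le, Real.norm_of_nonneg (by linarith), h1]
    nlinarith
  -- The inverse function theorem applies since the Jacobian determinant does not vanish.
  have hopen : IsOpen (f '' ball 0 1) := by
    rw [isOpen_iff_mem_nhds]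
    rintro _ ⟨x, hx, rfl⟩
    have hst : HasStrictFDerivAt f (1 + t • (fderiv ℝ r x - 1)) x :=
      (hasStrictFDerivAt_id x).add
        (((hr.contDiffAt.hasStrictFDerivAt one_ne_zero).sub (hasStrictFDerivAt_id x)).const_smul t)
    rw [← hst.map_nhds_eq_of_surj ?_]
    · exact Filter.image_mem_map (isOpen_ball.mem_nhds hx)
    · have hd : LinearMap.det ((1 + t • (fderiv ℝ r x - 1) : E →L[ℝ] E) : E →ₗ[ℝ] E) ≠ 0 :=
        (hdet x hx).ne'
      by_contra hne
      exact hd (det_eq_zero_of_range_ne_top hne)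
  apply Subset.antisymm
  · rintro _ ⟨x, hx, rfl⟩
    simpa using hmaps x (by simpa using hx)
  -- The image is open, and closed relative to the connected open ball: a point of the open ball in
  -- the image of the closed ball cannot come from the sphere, whose points are fixed.
  · have hK : IsClosed (f '' closedBall 0 1) :=
      ((isCompact_closedBall (0 : E) 1).image hfc).isClosed
    refine (convex_ball (0 : E) 1).isPreconnected.subset_left_of_subset_union hopen
      (v := (f '' closedBall 0 1)ᶜ) hK.isOpen_compl ?_ ?_ ?_
    · exact disjoint_compl_right_iff_subset.2 (image_mono ball_subset_closedBall)
    · intro y hy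
      by_cases hyK : y ∈ f '' closedBall 0 1
      · left
        obtain ⟨x, hx, rfl⟩ := hyK
        refine ⟨x, ?_, rfl⟩
        rw [mem_closedBall_zero_iff] at hx
        rw [mem_ball_zero_iff] at hy ⊢
        refine lt_of_le_of_ne hx fun hx1 => ?_
        have : f x = x := by simp [hf, hs x hx1]
        rw [this] at hy; linarith
      · exact Or.inr hyK
    · have h0 : (0 : E) ∈ ball (0 : E) 1 := by simp
      exact ⟨f 0, by simpa using hmaps 0 (by simp), mem_image_of_mem f h0⟩

/-- There is no `C¹` map into the unit sphere which restricts to the identity on the sphere. In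
dimension zero the unit sphere is empty, so `h1` alone is contradictory. -/
theorem no_smooth_retraction (r : E → E) (hr : ContDiff ℝ 1 r) (h1 : ∀ x, ‖r x‖ = 1)
    (hs : ∀ x, ‖x‖ = 1 → r x = x) : False := by
  borelize E
  let μ : Measure E := Measure.addHaar
  obtain ⟨ε, hε, hε1, H⟩ := image_homotopy r hr h1 hs
  have hcd : Continuous (fderiv ℝ r) := hr.continuous_fderiv one_ne_zero
  have hdr : Differentiable ℝ r := hr.differentiable one_ne_zero
  have hcont : ∀ t : ℝ, Continuous fun x => (1 + t • (fderiv ℝ r x - 1)).det := fun t =>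
    ContinuousLinearMap.continuous_det.comp
      (continuous_const.add ((hcd.sub continuous_const).const_smul t))
  have hint : ∀ t : ℝ, IntegrableOn (fun x => (1 + t • (fderiv ℝ r x - 1)).det)
      (ball (0 : E) 1) μ := fun t =>
    ((hcont t).continuousOn.integrableOn_compact (isCompact_closedBall (0 : E) 1)).mono_set
      ball_subset_closedBall
  have hvol : ∀ t : ℝ, 0 < t → t < ε →
      ∫ x in ball (0 : E) 1, (1 + t • (fderiv ℝ r x - 1)).det ∂μ = μ.real (ball (0 : E) 1) := by
    intro t ht htε
    obtain ⟨hd, hi, him⟩ := H t ht htε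
    have := lintegral_abs_det_fderiv_eq_addHaar_image μ (measurableSet_ball (x := (0 : E)) (ε := 1))
      (f := fun x => x + t • (r x - x)) (f' := fun x => 1 + t • (fderiv ℝ r x - 1))
      (fun x _ => ((hasFDerivAt_id x).add
        (((hdr x).hasFDerivAt.sub (hasFDerivAt_id x)).const_smul t)).hasFDerivWithinAt) hi
    rw [him] at this
    rw [measureReal_def, ← this, integral_eq_lintegral_of_nonneg_ae]
    · congr 1
      refine setLIntegral_congr_fun measurableSet_ball fun x hx => ?_
      simp only [abs_of_pos (hd x hx)]
    · filter_upwards [ae_restrict_mem measurableSet_ball] with x hx using (hd x hx).le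
    · exact (hcont t).aestronglyMeasurable
  have hinf : (Ioo 0 ε).Infinite := Ioo_infinite hε
  obtain ⟨S, hS, hcard⟩ := hinf.exists_subset_card_eq (Module.finrank ℝ E + 1)
  obtain ⟨w, hw, hwd⟩ := exists_lagrange_det (E := E) S (by omega)
  -- Differentiating `⟪r x, r x⟫ = 1` shows that the derivative of `r` takes values orthogonal to
  -- the nonzero vector `r x`, so it is not surjective.
  have hzero : ∀ x, (1 + (fderiv ℝ r x - 1)).det = 0 := by
    intro x
    rw [add_sub_cancel]
    refine det_eq_zero_of_range_ne_top fun htop => ?_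
    obtain ⟨v, hv⟩ : r x ∈ LinearMap.range (fderiv ℝ r x : E →ₗ[ℝ] E) := htop ▸ trivial
    have hv' : fderiv ℝ r x v = r x := hv
    have hder := (hdr x).hasFDerivAt.inner ℝ (hdr x).hasFDerivAt
    have hconst : (fun x => inner ℝ (r x) (r x)) = fun _ => (1 : ℝ) := by
      ext x; rw [real_inner_self_eq_norm_sq, h1]; norm_num
    rw [hconst] at hder
    have := congrArg (fun L : E →L[ℝ] ℝ => L v) (hder.unique (hasFDerivAt_const 1 x))
    simp [hv', h1] at this
  have h2 : ∑ t ∈ S, w t * ∫ x in ball (0 : E) 1, (1 + t • (fderiv ℝ r x - 1)).det ∂μ = 0 := by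
    simp_rw [← integral_const_mul]
    rw [← integral_finsetSum _ fun t _ => (hint t).const_mul _]
    simp only [hwd, hzero, integral_zero]
  rw [Finset.sum_congr rfl fun t ht => by rw [hvol t (hS ht).1 (hS ht).2], ← Finset.sum_mul, hw,
    one_mul] at h2
  have hp : 0 < μ.real (ball (0 : E) 1) :=
    ENNReal.toReal_pos (measure_ball_pos μ 0 one_pos).ne' measure_ball_lt_top.ne
  exact hp.ne' h2

/-! ### Zeros of perturbations of the identity -/

/-- A continuous map equal to the identity away from a ball inside the open unit ball has a zero:
otherwise a `C¹` approximation of it, normalized, would contradict `no_smooth_retraction`. -/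
theorem exists_zero_of_eq_id {F : E → E} (hF : Continuous F)
    (hid : ∀ x, 3 / 4 ≤ ‖x‖ → F x = x) : ∃ x, F x = 0 := by
  by_contra! hne
  obtain ⟨g, hg, hgF, hgS, -⟩ := hF.exists_contDiff_approx_and_eqOn 1 (ε := fun x => ‖F x‖)
    hF.norm (fun x => norm_pos_iff.2 (hne x)) (S := {x | 1 ≤ ‖x‖}) (U := {x | 3 / 4 < ‖x‖})
    (isClosed_le continuous_const continuous_norm)
    ((isOpen_lt continuous_const continuous_norm).mem_nhdsSet.2 fun x hx =>
      lt_of_lt_of_le (by norm_num : (3 / 4 : ℝ) < 1) hx)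
    (contDiff_id.contDiffOn.congr fun x hx => hid x (le_of_lt hx))
  have hg0 : ∀ x, g x ≠ 0 := by
    intro x hx
    have := hgF x
    rw [hx, dist_zero_left] at this
    exact lt_irrefl _ this
  have hg1 : ∀ x, ‖x‖ = 1 → g x = x := fun x hx =>
    (hgS (show 1 ≤ ‖x‖ from hx.ge)).trans (hid x (by rw [hx]; norm_num))
  refine no_smooth_retraction (fun x => ‖g x‖⁻¹ • g x) ?_ ?_ ?_
  · exact ((hg.norm ℝ hg0).inv fun x => norm_ne_zero_iff.2 (hg0 x)).smul hg
  · intro x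
    rw [norm_smul, norm_inv, norm_norm, inv_mul_cancel₀ (norm_ne_zero_iff.2 (hg0 x))]
  · intro x hx
    simp [hg1 x hx, hx]

/-- A consequence of Brouwer's theorem: small perturbations of the identity of the closed unit ball
have a zero. -/
theorem exists_zero_of_near_id {F : E → E} (hF : ContinuousOn F (closedBall 0 1))
    (hnear : ∀ x ∈ closedBall (0 : E) 1, ‖F x - x‖ ≤ 1 / 3) :
    ∃ x ∈ closedBall (0 : E) 1, F x = 0 := by
  obtain ⟨F', hFres⟩ := ContinuousMap.exists_restrict_eq (isClosed_closedBall (x := (0 : E)) (ε := 1))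
    ⟨_, hF.domRestrict⟩
  have hF'F : ∀ x ∈ closedBall (0 : E) 1, F' x = F x := fun x hx =>
    congrArg (fun k : C(closedBall (0 : E) 1, E) => k ⟨x, hx⟩) hFres
  -- A cutoff equal to `1` on the ball of radius `1 / 2` and to `0` off the ball of radius `3 / 4`.
  let l : E → ℝ := fun x => max 0 (min 1 (3 - 4 * ‖x‖))
  have hl : Continuous l := by fun_prop
  have hl1 : ∀ x, l x ≤ 1 := fun x => max_le zero_le_one (min_le_left _ _)
  have hl0 : ∀ x, 0 ≤ l x := fun x => le_max_left _ _
  obtain ⟨x, hx⟩ := exists_zero_of_eq_id (F := fun x => x + l x • (F' x - x))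
    (continuous_id.add (hl.smul (F'.continuous.sub continuous_id))) (by
      intro x hx
      have : l x = 0 := max_eq_left ((min_le_right _ _).trans (by linarith))
      simp [this])
  have hx34 : ‖x‖ < 3 / 4 := by
    by_contra! h
    have : l x = 0 := max_eq_left ((min_le_right _ _).trans (by linarith))
    simp only [this, zero_smul, add_zero] at hx
    rw [hx, norm_zero] at h; norm_num at h
  have hxB : x ∈ closedBall (0 : E) 1 := by rw [mem_closedBall_zero_iff]; linarith
  refine ⟨x, hxB, ?_⟩
  have hn : ‖x‖ ≤ 1 / 3 := by
    rw [eq_neg_of_add_eq_zero_left hx, norm_neg, norm_smul, Real.norm_of_nonneg (hl0 x),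
      hF'F x hxB]
    nlinarith [hnear x hxB, hl1 x, hl0 x, norm_nonneg (F x - x)]
  have hl' : l x = 1 := by
    simp only [l]; rw [min_eq_left (by linarith)]; norm_num
  rw [hl', one_smul, add_sub_cancel, hF'F x hxB] at hx
  exact hx

/-! ### Invariance of domain -/

/-- Invariance of domain at the centre of the closed unit ball. -/
theorem mem_interior_image_unitBall {f : E → E} (hf : ContinuousOn f (closedBall 0 1))
    (hinj : InjOn f (closedBall 0 1)) : f 0 ∈ interior (f '' closedBall 0 1) := by
  have h0 : (0 : E) ∈ closedBall (0 : E) 1 := by simp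
  have hK : IsCompact (f '' closedBall 0 1) :=
    (isCompact_closedBall (0 : E) 1).image_of_continuousOn hf
  obtain ⟨G, hG⟩ : ∃ G : C(E, E), ∀ x ∈ closedBall (0 : E) 1, G (f x) = x := by
    have hemb : IsClosedEmbedding ((closedBall (0 : E) 1).domRestrict f) :=
      hf.domRestrict.isClosedEmbedding hinj.injective
    obtain ⟨G, hG⟩ := ContinuousMap.exists_extension' hemb ⟨Subtype.val, continuous_subtype_val⟩
    exact ⟨G, fun x hx => congrFun hG ⟨x, hx⟩⟩
  by_contra hint
  obtain ⟨ρ, hρ, hGρ⟩ : ∃ ρ > 0, ∀ y, dist y (f 0) < ρ → ‖G y‖ < 1 / 10 := by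
    have : ∀ᶠ y in 𝓝 (f 0), ‖G y‖ < 1 / 10 := by
      refine G.continuous.norm.continuousAt.eventually (gt_mem_nhds ?_)
      simp [hG 0 h0]
    exact Metric.eventually_nhds_iff.1 this
  obtain ⟨ε, hε, rfl⟩ : ∃ ε > 0, 2 * ε = ρ := ⟨ρ / 2, by positivity, by ring⟩
  obtain ⟨c, hcf, hcε⟩ : ∃ c ∉ f '' closedBall 0 1, dist c (f 0) < ε := by
    by_contra! h
    refine hint (mem_interior_iff_mem_nhds.2 (Metric.mem_nhds_iff.2 ⟨ε, hε, fun y hy => ?_⟩))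
    by_contra hy'
    exact absurd (h y hy') (not_le.2 hy)
  obtain ⟨δ₀, hδ₀, hGδ₀⟩ := (hK.inter_right
    (isClosed_le continuous_const (continuous_id.dist continuous_const) :
      IsClosed {y | ε ≤ dist y c})).exists_forall_le' (f := fun y => ‖G y‖)
    G.continuous.norm.continuousOn (a := 0) (by
      rintro _ ⟨⟨x, hx, rfl⟩, hy⟩
      rw [norm_pos_iff, hG x hx]
      rintro rfl
      rw [mem_ofPred_eq, dist_comm] at hy
      exact absurd hcε (not_lt.2 hy))
  obtain ⟨δ, hδ, hδ1, hGδ⟩ : ∃ δ > 0, δ ≤ 1 / 10 ∧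
      ∀ y ∈ f '' closedBall 0 1, ε ≤ dist y c → δ ≤ ‖G y‖ :=
    ⟨min δ₀ (1 / 10), by positivity, min_le_right _ _, fun y hy hyc =>
      (min_le_left _ _).trans (hGδ₀ y ⟨hy, hyc⟩)⟩
  obtain ⟨P, hP, hPG, -⟩ := G.continuous.exists_contDiff_approx 1 (ε := fun _ => δ / 2)
    continuous_const (fun _ => by positivity)
  -- The image under `P` of the sphere is null, so almost every small shift `v` avoids it.
  obtain ⟨v, hvδ, hvP⟩ : ∃ v : E, ‖v‖ < δ / 2 ∧ ∀ z, dist z c = ε → P z ≠ v := by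
    borelize E
    have hnull : (Measure.addHaar : Measure E) (P '' sphere c ε) = 0 :=
      addHaar_image_eq_zero_of_differentiableOn_of_addHaar_eq_zero _
        (hP.differentiable one_ne_zero).differentiableOn
        (Measure.addHaar_sphere_of_ne_zero _ _ hε.ne')
    by_contra! h
    have hsub : ball (0 : E) (δ / 2) ⊆ P '' sphere c ε := fun v hv => by
      obtain ⟨z, hz, hzv⟩ := h v (by simpa using hv)
      exact ⟨z, hz, hzv⟩
    exact (measure_ball_pos Measure.addHaar (0 : E) (half_pos hδ)).ne'
      (measure_mono_null hsub hnull)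
  have hPvG : ∀ z, ‖P z - v - G z‖ < δ := fun z => by
    have h1 := hPG z
    rw [dist_eq_norm] at h1
    have : P z - v - G z = (P z - G z) - v := by abel
    rw [this]
    exact (norm_sub_le _ _).trans_lt (by linarith)
  -- The radial projection from `c` onto the complement of the open ball of radius `ε`.
  let Φ : E → E := fun y => c + max (ε / dist y c) 1 • (y - c)
  have hΦ1 : ∀ y, ε ≤ dist y c → Φ y = y := fun y hy => by
    have : max (ε / dist y c) 1 = 1 := max_eq_right ((div_le_one (hε.trans_le hy)).2 hy)
    simp [Φ, this]
  have hΦ2 : ∀ y, y ≠ c → dist y c < ε → dist (Φ y) c = ε := fun y hyc hy => by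
    have hd : 0 < dist y c := dist_pos.2 hyc
    have : max (ε / dist y c) 1 = ε / dist y c := max_eq_left ((one_le_div hd).2 hy.le)
    simp only [Φ, this]
    rw [dist_eq_norm, add_sub_cancel_left, norm_smul, ← dist_eq_norm,
      Real.norm_of_nonneg (by positivity)]
    field_simp
  have hfc : ∀ x ∈ closedBall (0 : E) 1, f x ≠ c := fun x hx h => hcf ⟨x, hx, h⟩
  have hΦc : ContinuousOn Φ {y | y ≠ c} := by
    refine continuousOn_const.add (ContinuousOn.smul (ContinuousOn.sup ?_ continuousOn_const)
      (continuousOn_id.sub continuousOn_const))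
    exact continuousOn_const.div (continuous_id.dist continuous_const).continuousOn
      fun y hy => (dist_pos.2 hy).ne'
  obtain ⟨x, hx, hx0⟩ := exists_zero_of_near_id (F := fun x => P (Φ (f x)) - v)
    ((hP.continuous.comp_continuousOn (hΦc.comp hf hfc)).sub continuousOn_const) (by
      intro x hx
      rcases le_or_gt ε (dist (f x) c) with h | h
      · have := hPvG (f x)
        rw [hG x hx] at this
        rw [hΦ1 _ h]; linarith
      · have hz := hΦ2 _ (hfc x hx) h
        have h1 := hPvG (Φ (f x))
        have h2 := hGρ (Φ (f x)) ((dist_triangle _ c _).trans_lt (by linarith))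
        have h3 := hGρ (f x) ((dist_triangle _ c _).trans_lt (by linarith))
        rw [hG x hx] at h3
        have : P (Φ (f x)) - v - x = (P (Φ (f x)) - v - G (Φ (f x))) + G (Φ (f x)) - x := by abel
        rw [this]
        refine (norm_sub_le _ _).trans ?_
        linarith [norm_add_le (P (Φ (f x)) - v - G (Φ (f x))) (G (Φ (f x)))])
  rcases le_or_gt ε (dist (f x) c) with h | h
  · have h1 := hPvG (f x)
    simp only [hΦ1 _ h] at hx0
    rw [hx0, zero_sub, norm_neg] at h1
    exact absurd (hGδ _ (mem_image_of_mem f hx) h) (not_le.2 h1)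
  · exact hvP _ (hΦ2 _ (hfc x hx) h) (sub_eq_zero.1 hx0)

theorem mem_interior_image_closedBall {f : E → E} {a : E} {R : ℝ} (hR : 0 < R)
    (hf : ContinuousOn f (closedBall a R)) (hinj : InjOn f (closedBall a R)) :
    f a ∈ interior (f '' closedBall a R) := by
  have hmem : ∀ x ∈ closedBall (0 : E) 1, a + R • x ∈ closedBall a R := fun x hx => by
    rw [mem_closedBall_zero_iff] at hx
    rw [mem_closedBall_iff_norm, add_sub_cancel_left, norm_smul, Real.norm_of_nonneg hR.le]
    nlinarith
  have := mem_interior_image_unitBall (f := fun x => f (a + R • x))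
    (hf.comp (by fun_prop) hmem) (fun x hx y hy h => by
      simpa [hR.ne'] using hinj (hmem x hx) (hmem y hy) h)
  simp only [smul_zero, add_zero] at this
  refine interior_mono ?_ this
  rintro _ ⟨x, hx, rfl⟩
  exact mem_image_of_mem f (hmem x hx)

/-- Invariance of domain in `ℝⁿ`, transferred from Euclidean space: the sup norm on
`Fin n → ℝ` defines the same topology. -/
theorem image_interior_subset {n : ℕ} {X : Set (Fin n → ℝ)} {h : (Fin n → ℝ) → (Fin n → ℝ)}
    (hc : ContinuousOn h X) (hinj : InjOn h X) : h '' interior X ⊆ interior (h '' X) := by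
  rintro _ ⟨a, ha, rfl⟩
  let e : EuclideanSpace ℝ (Fin n) ≃ₜ (Fin n → ℝ) := (EuclideanSpace.equiv (Fin n) ℝ).toHomeomorph
  have hnhds : e ⁻¹' X ∈ 𝓝 (e.symm a) := e.continuous.continuousAt.preimage_mem_nhds (by
    rw [e.apply_symm_apply]; exact mem_interior_iff_mem_nhds.1 ha)
  obtain ⟨R, hR, hsub⟩ := Metric.nhds_basis_closedBall.mem_iff.1 hnhds
  have := mem_interior_image_closedBall (f := fun x => e.symm (h (e x))) hR
    (e.symm.continuous.comp_continuousOn (hc.comp e.continuous.continuousOn hsub))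
    (fun x hx y hy hxy => e.injective (hinj (hsub hx) (hsub hy) (e.symm.injective hxy)))
  simp only [e.apply_symm_apply] at this
  have h2 : h a ∈ interior (e '' ((fun x => e.symm (h (e x))) '' closedBall (e.symm a) R)) := by
    rw [← e.image_interior]
    exact ⟨_, this, e.apply_symm_apply _⟩
  refine interior_mono ?_ h2
  rintro _ ⟨_, ⟨x, hx, rfl⟩, rfl⟩
  simp only [e.apply_symm_apply]
  exact mem_image_of_mem h (hsub hx)

end

/-- A homeomorphism between compact subsets `X, Y ⊆ ℝⁿ` (a continuous bijection
from `X` onto `Y` with continuous inverse, w.r.t. the subspace topologies) maps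
the frontier of `X` onto the frontier of `Y`, and the interior of `X` onto the
interior of `Y` (frontier/interior taken in `ℝⁿ`). -/
theorem homeomorphism_maps_frontier_and_interior
    {n : ℕ} (X Y : Set (Fin n → ℝ)) (hX : IsCompact X) (hY : IsCompact Y)
    (h g : (Fin n → ℝ) → (Fin n → ℝ))
    (hcont : ContinuousOn h X) (himg : h '' X = Y)
    (hgcont : ContinuousOn g Y)
    (hgh : ∀ x ∈ X, g (h x) = x) (hhg : ∀ y ∈ Y, h (g y) = y) :
    h '' frontier X = frontier Y ∧ h '' interior X = interior Y := by
  have hinj : Set.InjOn h X := Set.LeftInvOn.injOn hgh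
  have hginj : Set.InjOn g Y := Set.LeftInvOn.injOn hhg
  have hgimg : g '' Y = X := by rw [← himg]; exact Set.LeftInvOn.image_image hgh
  have hint : h '' interior X = interior Y := by
    apply Set.Subset.antisymm
    · simpa [himg] using image_interior_subset hcont hinj
    · intro y hy
      have := image_interior_subset hgcont hginj
      rw [hgimg] at this
      exact ⟨g y, this (Set.mem_image_of_mem g hy), hhg y (interior_subset hy)⟩
  refine ⟨?_, hint⟩
  rw [hX.isClosed.frontier_eq, hY.isClosed.frontier_eq, hinj.image_sdiff_subset interior_subset,
    himg, hint]
end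

section
/- Consider a neural network without hidden layers N : ℝᵐ → ℝⁿ given by N(x) = σ̂(W x + b), where W is a real n × m matrix, b ∈ ℝⁿ, and σ̂ applies a fixed activation function σ : ℝ → ℝ componentwise, i.e. N(x)ⱼ = σ((W x + b)ⱼ). If m ≥ n, W has full rank (rank W = n), and σ is strictly monotonic and continuous, then N is an open map. -/
/-!
The network is the composite of three open maps: the linear map `x ↦ W x`, the translation by `b`,
and the componentwise map `σ̂`. The linear map is onto, since its rank equals the dimension of its
target, and a surjective linear map onto a finite-dimensional space is open. A continuous strictly
monotone `σ : ℝ → ℝ` is an embedding because its range is an interval, and this interval is open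
because `σ x` lies strictly between `σ (x - 1)` and `σ (x + 1)`; hence `σ` is open. A finite product
of open maps is open, so `σ̂` is open as well.
-/

theorem StrictMono.isOpenMap_real {σ : ℝ → ℝ} (hmono : StrictMono σ) (hcont : Continuous σ) :
    IsOpenMap σ := by
  have hemb : Topology.IsEmbedding σ :=
    hmono.isEmbedding_of_ordConnected (isPreconnected_range hcont).ordConnected
  refine Topology.IsOpenEmbedding.isOpenMap ⟨hemb, isOpen_iff_mem_nhds.2 ?_⟩
  rintro _ ⟨x, rfl⟩
  exact Filter.mem_of_superset
    (Icc_mem_nhds (hmono (sub_one_lt x)) (hmono (lt_add_one x)))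
    (intermediate_value_univ (x - 1) (x + 1) hcont)

theorem StrictAnti.isOpenMap_real {σ : ℝ → ℝ} (hanti : StrictAnti σ) (hcont : Continuous σ) :
    IsOpenMap σ := by
  have h := (Homeomorph.neg ℝ).isOpenMap.comp (hanti.neg.isOpenMap_real hcont.neg)
  have heq : (Homeomorph.neg ℝ) ∘ (fun x => -σ x) = σ := by
    ext x
    simp
  rwa [heq] at h

theorem Matrix.mulVec_surjective_of_rank_eq {m n : ℕ} (W : Matrix (Fin n) (Fin m) ℝ)
    (hW : W.rank = n) : Function.Surjective W.mulVecLin :=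
  LinearMap.range_eq_top.1 (Submodule.eq_top_of_finrank_eq (by
    rw [Module.finrank_fin_fun]
    exact hW))

/-- A neural network without hidden layers `N(x) = σ̂(W x + b)`, with `m ≥ n`,
`W` an `n × m` real matrix of full rank, and `σ` strictly monotonic and
continuous, is an open map from `ℝᵐ` to `ℝⁿ`. -/
theorem singleLayer_network_isOpenMap
    {m n : ℕ} (hmn : m ≥ n) (W : Matrix (Fin n) (Fin m) ℝ) (hW : W.rank = n)
    (b : Fin n → ℝ) (σ : ℝ → ℝ)
    (hmono : StrictMono σ ∨ StrictAnti σ) (hcont : Continuous σ) :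
    IsOpenMap (fun x : Fin m → ℝ => fun j => σ ((W.mulVec x + b) j)) := by
  have hσ : IsOpenMap σ :=
    hmono.elim (fun h => h.isOpenMap_real hcont) (fun h => h.isOpenMap_real hcont)
  have hlin : IsOpenMap W.mulVecLin :=
    W.mulVecLin.isOpenMap_of_finiteDimensional (W.mulVec_surjective_of_rank_eq hW)
  have hpi : IsOpenMap (Pi.map fun _ : Fin n => σ) :=
    IsOpenMap.piMap (fun _ => hσ) (by simp [Filter.cofinite_eq_bot])
  exact hpi.comp ((isOpenMap_add_right b).comp hlin)
end

section
/- Consider a trapezoidal feedforward neural network with l layers: let d₀ ≥ d₁ ≥ … ≥ d_l be natural numbers, and for each i ∈ {1, …, l} let Wᵢ be a real dᵢ × d_{i-1} matrix of full rank (rank Wᵢ = dᵢ), bᵢ ∈ ℝ^{dᵢ}, and σᵢ : ℝ → ℝ a strictly monotonic continuous activation function. Define the layer maps Nᵢ : ℝ^{d_{i-1}} → ℝ^{dᵢ} by Nᵢ(x)ⱼ = σᵢ((Wᵢ x + bᵢ)ⱼ), and let N = N_l ∘ … ∘ N₂ ∘ N₁ : ℝ^{d₀} → ℝ^{d_l}.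 Then N is an open map. -/
/-!
Open maps compose, so it suffices that each layer is open. A layer is the composite of the linear
map `x ↦ W x`, which is surjective because `W` has full row rank and hence open by finite
dimensionality, a translation, and a finite product of copies of `σ`. By the intermediate value
theorem a strictly monotonic continuous `σ : ℝ → ℝ` is open, and a finite product of open maps is
open.
-/

/-- The function computed by the first `l` layers of a feedforward network with
layer dimensions `d 0, d 1, …`, weight matrices `W i`, biases `b i` and
componentwise activation functions `σ i`. -/
def networkFun (d : ℕ → ℕ) (W : ∀ i, Matrix (Fin (d (i + 1))) (Fin (d i)) ℝ)
    (b : ∀ i, Fin (d (i + 1)) → ℝ) (σ : ℕ → ℝ → ℝ) :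
    (l : ℕ) → (Fin (d 0) → ℝ) → (Fin (d l) → ℝ)
  | 0 => id
  | l + 1 => fun x =>
      fun j => σ l (((W l).mulVec (networkFun d W b σ l x) + b l) j)

/-- For `a < x < b`, the intermediate value theorem shows that the image of `[a, b]` contains
`[σ a, σ b]`, a neighbourhood of `σ x`. -/
lemma isOpenMap_of_strictMono {σ : ℝ → ℝ} (hm : StrictMono σ) (hc : Continuous σ) :
    IsOpenMap σ := by
  rw [isOpenMap_iff_nhds_le]
  intro x s hs
  obtain ⟨ε, hε, hball⟩ := Metric.nhds_basis_closedBall.mem_iff.1 (Filter.mem_map.1 hs)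
  rw [Real.closedBall_eq_Icc] at hball
  refine Filter.mem_of_superset
    (Icc_mem_nhds (hm (by linarith : x - ε < x)) (hm (by linarith : x < x + ε))) ?_
  refine (intermediate_value_Icc (by linarith) hc.continuousOn).trans ?_
  exact Set.image_subset_iff.2 hball

lemma isOpenMap_of_strictMono_or_strictAnti {σ : ℝ → ℝ} (hm : StrictMono σ ∨ StrictAnti σ)
    (hc : Continuous σ) : IsOpenMap σ := by
  rcases hm with hm | hm
  · exact isOpenMap_of_strictMono hm hc
  · have h : IsOpenMap fun x => -σ x := isOpenMap_of_strictMono hm.neg hc.neg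
    simpa [Function.comp_def] using (Homeomorph.neg ℝ).isOpenMap.comp h

lemma isOpenMap_mulVec_of_rank_eq {m n : ℕ} (A : Matrix (Fin m) (Fin n) ℝ) (hA : A.rank = m) :
    IsOpenMap A.mulVec := by
  refine A.mulVecLin.isOpenMap_of_finiteDimensional (LinearMap.range_eq_top.1 ?_)
  refine Submodule.eq_top_of_finrank_eq ?_
  rw [Module.finrank_fin_fun]
  exact hA

/-- A trapezoidal feedforward neural network — non-increasing layer dimensions,
full-rank weight matrices and strictly monotonic continuous activation
functions — is an open map. -/
theorem trapezoidal_network_isOpenMap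
    (l : ℕ) (d : ℕ → ℕ)
    (W : ∀ i, Matrix (Fin (d (i + 1))) (Fin (d i)) ℝ)
    (b : ∀ i, Fin (d (i + 1)) → ℝ) (σ : ℕ → ℝ → ℝ)
    (hdim : ∀ i < l, d (i + 1) ≤ d i)
    (hrank : ∀ i < l, (W i).rank = d (i + 1))
    (hmono : ∀ i < l, StrictMono (σ i) ∨ StrictAnti (σ i))
    (hcont : ∀ i < l, Continuous (σ i)) :
    IsOpenMap (networkFun d W b σ l) := by
  induction l with
  | zero => exact IsOpenMap.id
  | succ l ih =>
    have hprev : IsOpenMap (networkFun d W b σ l) :=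
      ih (fun i hi => hdim i (by omega)) (fun i hi => hrank i (by omega))
        (fun i hi => hmono i (by omega)) (fun i hi => hcont i (by omega))
    have hl : l < l + 1 := l.lt_succ_self
    have hσ : IsOpenMap (Pi.map fun _ : Fin (d (l + 1)) => σ l) :=
      IsOpenMap.piMap
        (fun _ => isOpenMap_of_strictMono_or_strictAnti (hmono l hl) (hcont l hl)) (by simp)
    exact hσ.comp <| (isOpenMap_add_right (b l)).comp <|
      (isOpenMap_mulVec_of_rank_eq (W l) (hrank l hl)).comp hprev
end

section
/- Let N : ℝⁿ → ℝⁿ be continuous, let X_in ⊆ ℝⁿ be compact, and let A ⊆ X_in be a compact subset with A ∩ ∂X_in = ∅ on which N is injective (so that N restricted to A is a homeomorphism onto its image N''(A)). Let X_s ⊆ ℝⁿ be a set whose complement ℝⁿ \ X_s is connected and unbounded. If N''(closure(X_in \ A)) ⊆ X_s, then N''(X_in) ⊆ X_s; that is, the safety of the whole input set follows from reachability analysis on the subset closure(X_in \ A) alone. -/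
/-!
The points of `A` lie in the interior of `Xin`, so a frontier point of `A` is a limit of points of
`Xin \ A`, and `N` sends it into `Xs`. By invariance of domain (`image_closedBall_mem_nhds`), `N`
sends interior points of `A` to interior points of `N '' A`. Hence `frontier (N '' A) ⊆ Xs`, and
the connected set `Xsᶜ` lies either inside or outside `N '' A`. Being unbounded, it is not
contained in the compact set `N '' A`, so it is disjoint from it.

Invariance of domain is deduced, following Kulpa, from a form of Brouwer's theorem
(`exists_eq_of_dist_le`): a continuous map on a closed ball that moves points by at most the radius
takes the centre as a value. With `f` injective on a ball, `G` a continuous extension of its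
inverse, and `f a` not interior to the image, `G` could be perturbed slightly on the image so as
to miss `a`; composing with `f` contradicts this.

The Brouwer statement rests on the change of variables identity
`∫ det D(id + h) * φ ∘ (id + h) = ∫ φ` over a large ball, for `h` of class `C¹` with compact
support. With `t • h` in place of `h` and `φ` a polynomial, the left-hand side is a polynomial in
`t`; for small `t > 0` the map `id + t • h` is a diffeomorphism of the ball, so this polynomial is
constant, and `t = 1` gives the identity (`setIntegral_comp_mvPolynomial`). Stone–Weierstrass
extends it to continuous `φ`, and a nonnegative `φ` vanishing exactly on the image of the ball
shows that `id + h` is surjective.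
-/

open Set Filter Topology MeasureTheory Metric

/-! ### The change of variables identity -/

/-- A polynomial in `t` whose coefficients are continuous functions of `x` still depends
polynomially on `t` after integration in `x` over a compact set. -/
lemma exists_polynomial_setIntegral {n : ℕ} {S : Set (Fin n → ℝ)} (hS : IsCompact S)
    (q : Polynomial C(Fin n → ℝ, ℝ)) :
    ∃ Q : Polynomial ℝ, ∀ t : ℝ,
      ∫ x in S, q.eval₂ (ContinuousMap.evalAlgHom ℝ ℝ x : C(Fin n → ℝ, ℝ) →+* ℝ) t = Q.eval t := by
  refine ⟨∑ k ∈ Finset.range (q.natDegree + 1), Polynomial.monomial k (∫ x in S, q.coeff k x), ?_⟩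
  intro t
  simp only [Polynomial.eval₂_eq_sum_range, Polynomial.eval_finsetSum, Polynomial.eval_monomial]
  rw [integral_finsetSum]
  · refine Finset.sum_congr rfl fun k _ => ?_
    rw [← integral_mul_const]
    rfl
  · intro k _
    exact (((q.coeff k).continuous.mul continuous_const).continuousOn).integrableOn_compact hS

/-- For small `t > 0`, `id + t • h` is a bijective Lipschitz perturbation of the identity with
positive Jacobian determinant that fixes the complement of the ball, so the usual change of
variables applies, without an absolute value on the determinant. -/
lemma setIntegral_comp_of_small {n : ℕ} {h : (Fin n → ℝ) → (Fin n → ℝ)}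
    (hh : ContDiff ℝ 1 h) (hc : HasCompactSupport h) {R : ℝ}
    (hR : tsupport h ⊆ closedBall 0 R) :
    ∃ ε > 0, ∀ t ∈ Ioo (0 : ℝ) ε, ∀ φ : (Fin n → ℝ) → ℝ,
      ∫ x in closedBall 0 R, (1 + t • fderiv ℝ h x).det * φ (x + t • h x)
        = ∫ x in closedBall 0 R, φ x := by
  obtain ⟨L, hL⟩ := hh.lipschitzWith_of_hasCompactSupport hc one_ne_zero
  -- the determinant is positive near the identity
  have hdet : ∀ᶠ A : (Fin n → ℝ) →L[ℝ] (Fin n → ℝ) in 𝓝 1, 0 < A.det := by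
    refine ContinuousLinearMap.continuous_det.continuousAt.eventually_const_lt ?_
    simp [ContinuousLinearMap.det]
  obtain ⟨δ, hδ, hdet⟩ := Metric.eventually_nhds_iff.1 hdet
  refine ⟨min 1 δ / (L + 1), by positivity, ?_⟩
  intro t ht φ
  have htL : t * (L + 1) < min 1 δ := (lt_div_iff₀ (by positivity)).1 ht.2
  have htL1 : t * L < 1 := by nlinarith [min_le_left 1 δ, ht.1]
  have htLδ : t * L < δ := by nlinarith [min_le_right 1 δ, ht.1]
  have hJ : ∀ x, 0 < (1 + t • fderiv ℝ h x).det := by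
    intro x
    apply hdet
    rw [dist_eq_norm, add_sub_cancel_left, norm_smul, Real.norm_of_nonneg ht.1.le]
    exact lt_of_le_of_lt
      (mul_le_mul_of_nonneg_left (norm_fderiv_le_of_lipschitz ℝ hL) ht.1.le) htLδ
  set F : (Fin n → ℝ) → (Fin n → ℝ) := fun x => x + t • h x with hF
  have happ : ApproximatesLinearOn F
      ((ContinuousLinearEquiv.refl ℝ (Fin n → ℝ) : (Fin n → ℝ) ≃L[ℝ] (Fin n → ℝ)) :
        (Fin n → ℝ) →L[ℝ] (Fin n → ℝ)) univ (t.toNNReal * L) := by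
    intro x _ y _
    have : F x - F y - (x - y) = t • (h x - h y) := by simp only [hF, smul_sub]; abel
    simp only [ContinuousLinearEquiv.coe_refl, ContinuousLinearMap.id_apply, this,
      norm_smul, Real.norm_of_nonneg ht.1.le,
      NNReal.coe_mul, Real.coe_toNNReal _ ht.1.le, mul_assoc]
    have := hL.dist_le_mul x y
    rw [dist_eq_norm, dist_eq_norm] at this
    exact mul_le_mul_of_nonneg_left this ht.1.le
  have hcN : Subsingleton (Fin n → ℝ) ∨ t.toNNReal * L <
      ‖((ContinuousLinearEquiv.refl ℝ (Fin n → ℝ)).symm :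
        (Fin n → ℝ) →L[ℝ] (Fin n → ℝ))‖₊⁻¹ := by
    rcases subsingleton_or_nontrivial (Fin n → ℝ) with hs | hs
    · exact Or.inl hs
    · right
      have : ‖((ContinuousLinearEquiv.refl ℝ (Fin n → ℝ)).symm :
        (Fin n → ℝ) →L[ℝ] (Fin n → ℝ))‖₊ = 1 := by
        ext; exact ContinuousLinearMap.norm_id
      rw [this, inv_one, ← NNReal.coe_lt_coe]
      simpa [Real.coe_toNNReal _ ht.1.le] using htL1
  have hinj : Function.Injective F := injOn_univ.1 (happ.injOn hcN)
  have hsurj : Function.Surjective F := happ.surjective hcN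
  have hout : ∀ x, x ∉ closedBall (0 : Fin n → ℝ) R → F x = x := by
    intro x hx
    have : h x = 0 := image_eq_zero_of_notMem_tsupport fun h' => hx (hR h')
    simp [hF, this]
  -- a bijection fixing every point off the ball maps the ball onto itself
  have himg : F '' closedBall 0 R = closedBall 0 R := by
    apply Subset.antisymm
    · rintro _ ⟨x, hx, rfl⟩
      by_contra hy
      exact hy (by rw [hinj (hout _ hy)]; exact hx)
    · intro y hy
      obtain ⟨x, rfl⟩ := hsurj y
      by_contra hx
      have hx' : x ∉ closedBall (0 : Fin n → ℝ) R := fun h' => hx ⟨x, h', rfl⟩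
      rw [hout x hx'] at hy
      exact hx' hy
  have hder : ∀ x ∈ closedBall (0 : Fin n → ℝ) R,
      HasFDerivWithinAt F (1 + t • fderiv ℝ h x) (closedBall 0 R) x := by
    intro x _
    exact ((hasFDerivAt_id x).add
      (((hh.differentiable one_ne_zero) x).hasFDerivAt.const_smul t)).hasFDerivWithinAt
  have := integral_image_eq_integral_abs_det_fderiv_smul volume
    isClosed_closedBall.measurableSet hder hinj.injOn φ
  rw [himg] at this
  rw [this]
  refine integral_congr_ae (Eventually.of_forall fun x => ?_)
  simp [abs_of_pos (hJ x), hF]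

/-- For polynomial `φ` the left-hand side with `t • h` in place of `h` is a polynomial in `t`,
constant for small `t > 0`, hence constant; this is its value at `t = 1`, where `id + h` need not be
injective. -/
lemma setIntegral_comp_mvPolynomial {n : ℕ} {h : (Fin n → ℝ) → (Fin n → ℝ)}
    (hh : ContDiff ℝ 1 h) (hc : HasCompactSupport h) {R : ℝ}
    (hR : tsupport h ⊆ closedBall 0 R) (φ : MvPolynomial (Fin n) ℝ) :
    ∫ x in closedBall 0 R, (1 + fderiv ℝ h x).det * φ.eval (x + h x)
        = ∫ x in closedBall 0 R, φ.eval x := by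
  have hcf : Continuous (fderiv ℝ h) := hh.continuous_fderiv one_ne_zero
  have hch := hh.continuous
  -- the Jacobian matrix of `id + t • h`, with `t` as the polynomial variable `X`
  let M : Matrix (Fin n) (Fin n) (Polynomial C(Fin n → ℝ, ℝ)) := fun i j =>
    (if i = j then 1 else 0) + Polynomial.X * Polynomial.C
      ⟨fun x => fderiv ℝ h x (Pi.single j 1) i, by fun_prop⟩
  let q : Polynomial C(Fin n → ℝ, ℝ) := M.det * MvPolynomial.aeval (fun i =>
    Polynomial.C (⟨fun x => x i, by fun_prop⟩ : C(Fin n → ℝ, ℝ)) +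
      Polynomial.X * Polynomial.C (⟨fun x => h x i, by fun_prop⟩ : C(Fin n → ℝ, ℝ))) φ
  have hq : ∀ (t : ℝ) (x : Fin n → ℝ),
      q.eval₂ (ContinuousMap.evalAlgHom ℝ ℝ x : C(Fin n → ℝ, ℝ) →+* ℝ) t
        = (1 + t • fderiv ℝ h x).det * φ.eval (x + t • h x) := by
    intro t x
    rw [← Polynomial.coe_eval₂RingHom]
    simp only [q, map_mul]
    congr 1
    · rw [RingHom.map_det, ContinuousLinearMap.det, ← LinearMap.det_toMatrix']
      congr 1
      ext i j
      rw [RingHom.mapMatrix_apply, Matrix.map_apply, LinearMap.toMatrix'_apply]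
      by_cases hij : i = j <;> simp [M, hij] <;> exact mul_comm _ _
    · rw [MvPolynomial.map_aeval, Subsingleton.elim (RingHom.comp _ _) (RingHom.id ℝ)]
      change MvPolynomial.eval (fun i => _) φ = _
      congr 2
      ext i
      simpa using mul_comm _ _
  obtain ⟨Q, hQ⟩ := exists_polynomial_setIntegral (isCompact_closedBall 0 R) q
  obtain ⟨ε, hε, hsmall⟩ := setIntegral_comp_of_small hh hc hR
  have hconst : Q = Polynomial.C (∫ x in closedBall 0 R, φ.eval x) := by
    refine Polynomial.eq_of_infinite_eval_eq _ _ ((Ioo_infinite hε).mono fun t ht => ?_)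
    simp only [mem_ofPred_eq, Polynomial.eval_C, ← hQ, hq]
    exact hsmall t ht fun y => φ.eval y
  have := hQ 1
  simpa [hq, hconst] using this

/-- Both sides are continuous in `φ` for uniform convergence on the ball and its image, so the
polynomial case extends by Stone–Weierstrass. -/
lemma setIntegral_comp_continuous {n : ℕ} {h : (Fin n → ℝ) → (Fin n → ℝ)}
    (hh : ContDiff ℝ 1 h) (hc : HasCompactSupport h) {R : ℝ}
    (hR : tsupport h ⊆ closedBall 0 R) {φ : (Fin n → ℝ) → ℝ} (hφ : Continuous φ) :
    ∫ x in closedBall 0 R, (1 + fderiv ℝ h x).det * φ (x + h x)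
        = ∫ x in closedBall 0 R, φ x := by
  have hcf : Continuous (fderiv ℝ h) := hh.continuous_fderiv one_ne_zero
  have hch := hh.continuous
  set S := closedBall (0 : Fin n → ℝ) R with hSdef
  have hS : IsCompact S := isCompact_closedBall 0 R
  set F : (Fin n → ℝ) → (Fin n → ℝ) := fun x => x + h x
  have hF : Continuous F := by fun_prop
  set J : (Fin n → ℝ) → ℝ := fun x => (1 + fderiv ℝ h x).det
  have hJ : Continuous J := ContinuousLinearMap.continuous_det.comp (by fun_prop)
  have hint : ∀ {g : (Fin n → ℝ) → ℝ}, Continuous g → IntegrableOn g S := fun hg =>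
    hg.continuousOn.integrableOn_compact hS
  let A : Subalgebra ℝ C(Fin n → ℝ, ℝ) := (MvPolynomial.aeval
    (fun i => (⟨fun x => x i, by fun_prop⟩ : C(Fin n → ℝ, ℝ)))).range
  have hA : A.SeparatesPoints := by
    intro x y hxy
    obtain ⟨i, hi⟩ := Function.ne_iff.1 hxy
    exact ⟨_, ⟨_, ⟨MvPolynomial.X i, rfl⟩, rfl⟩, by simpa using hi⟩
  set C := (∫ x in S, |J x|) + ∫ _x in S, (1 : ℝ)
  have hC : 0 ≤ C := add_nonneg (integral_nonneg fun _ => abs_nonneg _)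
    (integral_nonneg fun _ => zero_le_one)
  have key : ∀ ε > 0, |(∫ x in S, J x * φ (F x)) - ∫ x in S, φ x| ≤ C * ε := by
    intro ε hε
    obtain ⟨g, ⟨p, rfl⟩, hg⟩ :=
      ContinuousMap.exists_mem_subalgebra_near_continuous_of_isCompact_of_separatesPoints
      hA ⟨φ, hφ⟩ (hS.union (hS.image hF)) hε
    have hp : ∀ x ∈ S ∪ F '' S, |p.eval x - φ x| ≤ ε := by
      intro x hx
      have := (hg x hx).le
      have e : (MvPolynomial.aeval
          (fun i => (⟨fun x => x i, by fun_prop⟩ : C(Fin n → ℝ, ℝ))) p) x = p.eval x := by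
        change (ContinuousMap.evalAlgHom ℝ ℝ x : C(Fin n → ℝ, ℝ) →+* ℝ) _ = _
        rw [MvPolynomial.map_aeval, Subsingleton.elim (RingHom.comp _ _) (RingHom.id ℝ)]
        rfl
      rw [← e]
      exact this
    have hpc : Continuous fun x => p.eval x := MvPolynomial.continuous_eval p
    have h0 := setIntegral_comp_mvPolynomial hh hc hR p
    have e1 : (∫ x in S, J x * φ (F x)) - ∫ x in S, φ x
        = (∫ x in S, (p.eval x - φ x)) - ∫ x in S, J x * (p.eval (F x) - φ (F x)) := by
      simp only [mul_sub]
      rw [integral_sub (hint hpc) (hint hφ), integral_sub (hint (g := fun x => J x * p.eval (F x))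
        (hJ.mul (hpc.comp hF))) (hint (g := fun x => J x * φ (F x)) (hJ.mul (hφ.comp hF)))]
      have : ∫ x in S, J x * p.eval (F x) = ∫ x in S, p.eval x := h0
      rw [this]; ring
    rw [e1]
    have b1 : |∫ x in S, (p.eval x - φ x)| ≤ (∫ _x in S, (1 : ℝ)) * ε := by
      rw [← integral_mul_const]
      rw [← Real.norm_eq_abs]
      refine norm_integral_le_of_norm_le (hint continuous_const) ?_
      filter_upwards [ae_restrict_mem hS.measurableSet] with x hx
      simpa using hp x (Or.inl hx)
    have b2 : |∫ x in S, J x * (p.eval (F x) - φ (F x))| ≤ (∫ x in S, |J x|) * ε := by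
      rw [← integral_mul_const]
      rw [← Real.norm_eq_abs]
      refine norm_integral_le_of_norm_le
        (hint (g := fun x => |J x| * ε) (hJ.abs.mul continuous_const)) ?_
      filter_upwards [ae_restrict_mem hS.measurableSet] with x hx
      rw [Real.norm_eq_abs, abs_mul]
      exact mul_le_mul_of_nonneg_left (hp _ (Or.inr ⟨x, hx, rfl⟩)) (abs_nonneg _)
    calc _ ≤ _ := abs_sub _ _
      _ ≤ _ := add_le_add b1 b2
      _ = C * ε := by ring
  refine eq_of_abs_sub_nonpos (le_of_forall_pos_le_add fun ε hε => ?_)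
  refine (key (ε / (C + 1)) (by positivity)).trans ?_
  rw [zero_add, mul_div_assoc', div_le_iff₀ (by positivity)]
  nlinarith

/-! ### Surjectivity of perturbations of the identity -/

/-- If `p` were missed, testing the change of variables identity against the distance to the image
of a ball containing `p` and the support of `h` would give a positive integral equal to zero. -/
lemma surjective_id_add_of_contDiff {n : ℕ} {h : (Fin n → ℝ) → (Fin n → ℝ)}
    (hh : ContDiff ℝ 1 h) (hc : HasCompactSupport h) :
    Function.Surjective fun x => x + h x := by
  intro p
  by_contra hp
  push Not at hp
  obtain ⟨R, hR⟩ := (hc.isCompact.isBounded.union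
    (Bornology.isBounded_singleton (x := p))).subset_closedBall 0
  have hR1 : tsupport h ⊆ closedBall 0 (R + 1) :=
    (subset_union_left.trans hR).trans (closedBall_subset_closedBall (by linarith))
  have hpR : p ∈ ball (0 : Fin n → ℝ) (R + 1) := by
    have := hR (Or.inr rfl)
    rw [mem_closedBall] at this
    rw [mem_ball]; linarith
  set S := closedBall (0 : Fin n → ℝ) (R + 1)
  have hS : IsCompact S := isCompact_closedBall 0 _
  have hF : Continuous fun x => x + h x := continuous_id.add hh.continuous
  set K := (fun x => x + h x) '' S with hK
  have hKne : K.Nonempty := ⟨p + h p, p, ball_subset_closedBall hpR, rfl⟩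
  have hφ : Continuous fun y => infDist y K := continuous_infDist_pt K
  have hKcl : infDist p K = 0 → p ∈ K :=
    ((hS.image hF).isClosed.mem_iff_infDist_zero hKne).2
  have hφp : infDist p K ≠ 0 := by
    intro h0
    obtain ⟨x, -, hx⟩ := hKcl h0
    exact hp x hx
  have hI := setIntegral_comp_continuous hh hc hR1 hφ
  have hzero : ∫ x in S, (1 + fderiv ℝ h x).det * infDist (x + h x) K = 0 := by
    refine setIntegral_eq_zero_of_forall_eq_zero fun x hx => ?_
    rw [infDist_zero_of_mem (show x + h x ∈ K from ⟨x, hx, rfl⟩), mul_zero]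
  have hpos : 0 < ∫ x in S, infDist x K := by
    rw [setIntegral_pos_iff_support_of_nonneg_ae
      (Eventually.of_forall fun _ => infDist_nonneg)
      (hφ.continuousOn.integrableOn_compact hS)]
    refine lt_of_lt_of_le ?_ (measure_mono (inter_subset_inter_right _ ball_subset_closedBall))
    exact ((hφ.isOpen_support).inter isOpen_ball).measure_pos volume ⟨p, hφp, hpR⟩
  exact hpos.ne' (hI.symm.trans hzero)

lemma surjective_id_add_of_compactSupport {n : ℕ} {h : (Fin n → ℝ) → (Fin n → ℝ)}
    (hh : Continuous h) (hc : HasCompactSupport h) :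
    Function.Surjective fun x => x + h x := by
  intro p
  by_contra hp
  push Not at hp
  -- the allowed error at `x` is the distance from `x + h x` to the missed point
  obtain ⟨g, hg, hgh, hsupp⟩ := hh.exists_contDiff_approx 1
    (ε := fun x => ‖x + h x - p‖) (by fun_prop) (fun x => norm_pos_iff.2 (sub_ne_zero.2 (hp x)))
  obtain ⟨x, hx⟩ := surjective_id_add_of_contDiff hg
    (hc.mono hsupp) p
  have hx : x + g x = p := hx
  have := hgh x
  rw [← hx, add_sub_add_left_eq_sub, dist_comm, dist_eq_norm] at this
  exact lt_irrefl _ this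

lemma surjective_id_add_of_bounded {n : ℕ} {h : (Fin n → ℝ) → (Fin n → ℝ)}
    (hh : Continuous h) {C : ℝ} (hC : ∀ x, ‖h x‖ ≤ C) :
    Function.Surjective fun x => x + h x := by
  intro p
  -- a cutoff equal to `1` on the ball of radius `‖p‖ + C`, where any preimage of `p` must lie
  set χ : (Fin n → ℝ) → ℝ := fun x => max 0 (min 1 (‖p‖ + C + 1 - ‖x‖)) with hχ
  have hχ1 : ∀ x, χ x ≤ 1 := fun x => max_le zero_le_one (min_le_left _ _)
  have hχ0 : ∀ x, 0 ≤ χ x := fun x => le_max_left _ _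
  have hsupp : HasCompactSupport fun x => χ x • h x := by
    refine HasCompactSupport.intro (isCompact_closedBall 0 (‖p‖ + C + 1)) fun x hx => ?_
    rw [mem_closedBall, dist_zero_right, not_le] at hx
    have : χ x = 0 := max_eq_left ((min_le_right _ _).trans (by linarith))
    simp [this]
  obtain ⟨x, hx⟩ := surjective_id_add_of_compactSupport (by fun_prop) hsupp p
  have hx : x + χ x • h x = p := hx
  have hb : ‖χ x • h x‖ ≤ C := by
    rw [norm_smul, Real.norm_of_nonneg (hχ0 x)]
    exact (mul_le_of_le_one_left (norm_nonneg _) (hχ1 x)).trans (hC x)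
  have hxn : ‖x‖ ≤ ‖p‖ + C := by
    have e : x = p - χ x • h x := eq_sub_of_add_eq hx
    calc ‖x‖ = ‖p - χ x • h x‖ := congrArg _ e
      _ ≤ ‖p‖ + ‖χ x • h x‖ := norm_sub_le _ _
      _ ≤ ‖p‖ + C := by gcongr
  have : χ x = 1 := by
    simp only [hχ]
    rw [min_eq_left (by linarith), max_eq_right zero_le_one]
  exact ⟨x, by simpa [this] using hx⟩

/-- A form of Brouwer's fixed point theorem: `x ↦ a + x - H x` maps the ball into itself, and its
fixed points are the solutions of `H x = a`. -/
lemma exists_eq_of_dist_le {n : ℕ} {H : (Fin n → ℝ) → (Fin n → ℝ)} {a : Fin n → ℝ} {r : ℝ}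
    (hr : 0 < r) (hH : ContinuousOn H (closedBall a r))
    (hd : ∀ x ∈ closedBall a r, dist (H x) x ≤ r) :
    ∃ x ∈ closedBall a r, H x = a := by
  -- the radial retraction onto the ball extends `H - id` to a bounded map on the whole space
  set ρ : (Fin n → ℝ) → (Fin n → ℝ) := fun x => a + (r / max r ‖x - a‖) • (x - a) with hρ
  have hmax : ∀ x, 0 < max r ‖x - a‖ := fun x => lt_max_of_lt_left hr
  have hρc : Continuous ρ := by
    have : Continuous fun x => r / max r ‖x - a‖ :=
      continuous_const.div (by fun_prop) fun x => (hmax x).ne'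
    fun_prop
  have hρm : ∀ x, ρ x ∈ closedBall a r := by
    intro x
    rw [mem_closedBall, dist_eq_norm, hρ]
    simp only [add_sub_cancel_left]
    rw [norm_smul, Real.norm_of_nonneg (by positivity), div_mul_eq_mul_div,
      div_le_iff₀ (hmax x)]
    exact mul_le_mul_of_nonneg_left (le_max_right _ _) hr.le
  have hρid : ∀ x ∈ closedBall a r, ρ x = x := by
    intro x hx
    rw [mem_closedBall, dist_eq_norm] at hx
    simp [hρ, max_eq_left hx, div_self hr.ne']
  obtain ⟨x, hx⟩ := surjective_id_add_of_bounded (h := fun x => H (ρ x) - ρ x) (C := r)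
    ((hH.comp_continuous hρc hρm).sub hρc)
    (fun x => by rw [← dist_eq_norm]; exact hd _ (hρm x)) a
  have hx : x + (H (ρ x) - ρ x) = a := hx
  have hxm : x ∈ closedBall a r := by
    have := hd _ (hρm x)
    rw [mem_closedBall, dist_comm]
    conv_lhs => rw [← hx]
    rwa [dist_eq_norm, add_sub_cancel_left, ← dist_eq_norm]
  refine ⟨x, hxm, ?_⟩
  rw [hρid x hxm] at hx
  simpa using hx

/-! ### Invariance of domain -/

/-- Invariance of domain: a continuous injective map on a closed ball sends the centre to an interior
point of the image. -/
lemma image_closedBall_mem_nhds {n : ℕ} {f : (Fin n → ℝ) → (Fin n → ℝ)} {a : Fin n → ℝ} {r : ℝ}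
    (hr : 0 < r) (hf : ContinuousOn f (closedBall a r)) (hinj : InjOn f (closedBall a r)) :
    f '' closedBall a r ∈ 𝓝 (f a) := by
  by_contra hnot
  set B := closedBall a r with hB
  have hBc : IsCompact B := isCompact_closedBall a r
  have haB : a ∈ B := mem_closedBall_self hr.le
  set K := f '' B with hK
  have hKc : IsCompact K := hBc.image_of_continuousOn hf
  -- a continuous extension of the inverse of `f`, by Tietze
  obtain ⟨G, hG⟩ : ∃ G : C(Fin n → ℝ, Fin n → ℝ), ∀ x ∈ B, G (f x) = x := by
    have : CompactSpace B := isCompact_iff_compactSpace.1 hBc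
    have hemb : IsClosedEmbedding (B.domRestrict f) :=
      (continuousOn_iff_continuous_domRestrict.1 hf).isClosedEmbedding (injOn_iff_injective.1 hinj)
    obtain ⟨G, hG⟩ := ContinuousMap.exists_extension' hemb
      (⟨Subtype.val, continuous_subtype_val⟩ : C(B, Fin n → ℝ))
    exact ⟨G, fun x hx => congrFun hG ⟨x, hx⟩⟩
  obtain ⟨η₀, he₀, hGe⟩ := Metric.continuous_iff.1 G.continuous (f a) (r / 10) (by positivity)
  obtain ⟨η, hη, rfl⟩ : ∃ η > 0, η₀ = 2 * η := ⟨η₀ / 2, by positivity, by ring⟩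
  rw [hG a haB] at hGe
  -- a point near `f a` missed by `K`
  obtain ⟨c, hcη, hcK⟩ : ∃ c ∈ ball (f a) η, c ∉ K := by
    by_contra! hcon
    exact hnot (mem_of_superset (ball_mem_nhds _ hη) hcon)
  rw [mem_ball] at hcη
  set K₁ := K \ ball c η with hK₁
  have hK₁c : IsCompact K₁ := hKc.diff isOpen_ball
  have hGa : ∀ y ∈ K₁, 0 < dist (G y) a := by
    rintro _ ⟨⟨x, hx, rfl⟩, hy⟩
    rw [dist_pos, hG x hx]
    rintro rfl
    exact hy (by rwa [mem_ball, dist_comm])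
  obtain ⟨δ, hδ, hδr, hδK⟩ : ∃ δ > 0, δ ≤ r / 10 ∧ ∀ y ∈ K₁, δ ≤ dist (G y) a := by
    obtain ⟨δ, hδ, h⟩ := hK₁c.exists_forall_le'
      (f := fun y => dist (G y) a) (by fun_prop) hGa
    exact ⟨min δ (r / 10), by positivity, min_le_right _ _, fun y hy =>
      (min_le_left _ _).trans (h y hy)⟩
  obtain ⟨P, hP, hPG, -⟩ := G.continuous.exists_contDiff_approx 1
    (ε := fun _ => δ / 2) continuous_const (fun _ => by positivity)
  -- the image of the sphere under a `C¹` map is null, so a small translate of `P` avoids `a` there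
  have hnull : volume (P '' sphere c η) = 0 :=
    addHaar_image_eq_zero_of_differentiableOn_of_addHaar_eq_zero volume
      (hP.differentiable one_ne_zero).differentiableOn (Measure.addHaar_sphere_of_ne_zero volume c hη.ne')
  obtain ⟨b, hbδ, hbP⟩ : ∃ b ∈ ball a (δ / 2), b ∉ P '' sphere c η := by
    by_contra! hcon
    exact (measure_ball_pos volume a (half_pos hδ)).ne' (measure_mono_null hcon hnull)
  rw [mem_ball] at hbδ
  -- `Φ` pushes the part of `K` near `c` radially onto the sphere, so that `P ∘ Φ - (b - a)` is close
  -- to `G` on `K` but does not take the value `a` there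
  set Φ : (Fin n → ℝ) → (Fin n → ℝ) := fun y => c + max (η / ‖y - c‖) 1 • (y - c) with hΦ
  have hne : ∀ y ∈ K, 0 < ‖y - c‖ := fun y hy =>
    norm_pos_iff.2 (sub_ne_zero.2 fun h => hcK (h ▸ hy))
  have hΦc : ContinuousOn Φ K := by
    have : ContinuousOn (fun y => η / ‖y - c‖) K :=
      continuousOn_const.div (by fun_prop) fun y hy => (hne y hy).ne'
    fun_prop
  have hΦout : ∀ y ∈ K₁, Φ y = y := by
    intro y hy
    have h1 : η ≤ ‖y - c‖ := by
      have := hy.2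
      rwa [mem_ball, not_lt, dist_eq_norm] at this
    have : max (η / ‖y - c‖) 1 = 1 := max_eq_right ((div_le_one (hne y hy.1)).2 h1)
    simp [hΦ, this]
  have hΦin : ∀ y ∈ K, y ∈ ball c η → Φ y ∈ sphere c η := by
    intro y hy hyc
    rw [mem_ball, dist_eq_norm] at hyc
    have h0 := hne y hy
    have : max (η / ‖y - c‖) 1 = η / ‖y - c‖ := max_eq_left ((one_le_div h0).2 hyc.le)
    rw [mem_sphere, dist_eq_norm]
    simp only [hΦ, this, add_sub_cancel_left]
    rw [norm_smul, Real.norm_of_nonneg (by positivity), div_mul_cancel₀ _ h0.ne']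
  obtain ⟨x, hxB, hx⟩ := exists_eq_of_dist_le (H := fun x => P (Φ (f x)) - (b - a)) hr
    ((hP.continuous.comp_continuousOn (hΦc.comp hf (mapsTo_image f B))).sub continuousOn_const) (by
      intro x hxB
      have hyK : f x ∈ K := mem_image_of_mem f hxB
      have e1 : dist (P (Φ (f x)) - (b - a)) x
          ≤ dist b a + dist (P (Φ (f x))) (G (Φ (f x))) + dist (G (Φ (f x))) (G (f x)) := by
        rw [hG x hxB, dist_eq_norm, dist_eq_norm, dist_eq_norm, dist_eq_norm]
        calc _ = ‖(-(b - a) + (P (Φ (f x)) - G (Φ (f x)))) + (G (Φ (f x)) - x)‖ := by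
              congr 1; abel
          _ ≤ _ := (norm_add_le _ _).trans (by
              gcongr
              exact (norm_add_le _ _).trans (by rw [norm_neg]))
      have e2 : dist (G (Φ (f x))) (G (f x)) ≤ r / 10 + r / 10 := by
        by_cases hyc : f x ∈ ball c η
        · have h1 : dist (f x) (f a) < 2 * η := by
            have := dist_triangle (f x) c (f a)
            rw [mem_ball] at hyc; linarith
          have h2 : dist (Φ (f x)) (f a) < 2 * η := by
            have := dist_triangle (Φ (f x)) c (f a)
            have h3 := hΦin _ hyK hyc
            rw [mem_sphere] at h3; linarith
          have := dist_triangle_right (G (Φ (f x))) (G (f x)) a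
          linarith [hGe _ h1, hGe _ h2]
        · rw [hΦout _ ⟨hyK, hyc⟩, dist_self]; positivity
      have := hPG (Φ (f x))
      linarith)
  have hyK : f x ∈ K := mem_image_of_mem f hxB
  have hPb : P (Φ (f x)) = b := by
    have : P (Φ (f x)) - (b - a) = a := hx
    rw [sub_eq_iff_eq_add] at this
    rw [this]; abel
  by_cases hyc : f x ∈ ball c η
  · exact hbP ⟨_, hΦin _ hyK hyc, hPb⟩
  · rw [hΦout _ ⟨hyK, hyc⟩] at hPb
    have h1 := hδK _ ⟨hyK, hyc⟩
    have h2 := hPG (f x)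
    rw [hPb] at h2
    have := dist_triangle_left (G (f x)) a b
    linarith

/-! ### Safety verification -/

/-- Safety verification for non-invertible networks via a locally homeomorphic
subset: if `N : ℝⁿ → ℝⁿ` is continuous, `X_in` is compact, `A ⊆ X_in` is a
compact subset avoiding `∂X_in` on which `N` is injective, and the safe set
`X_s` has connected unbounded complement, then
`N '' closure (X_in \ A) ⊆ X_s` implies `N '' X_in ⊆ X_s`. -/
theorem safety_verification_noninvertible
    {n : ℕ} (N : (Fin n → ℝ) → (Fin n → ℝ)) (hN : Continuous N)
    (Xin A Xs : Set (Fin n → ℝ)) (hXin : IsCompact Xin)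
    (hA : A ⊆ Xin) (hAcomp : IsCompact A) (hAfr : A ∩ frontier Xin = ∅)
    (hinj : Set.InjOn N A)
    (hconn : IsConnected Xsᶜ) (hunb : ¬ Bornology.IsBounded Xsᶜ)
    (hbound : N '' closure (Xin \ A) ⊆ Xs) :
    N '' Xin ⊆ Xs := by
  have hAint : A ⊆ interior Xin := by
    intro a ha
    by_contra h
    exact (hAfr ▸ (⟨ha, subset_closure (hA ha), h⟩ : a ∈ A ∩ frontier Xin) : a ∈ (∅ : Set _))
  -- boundary points of `A` are limits of points of `Xin \ A`
  have hfr : ∀ a ∈ A, a ∉ interior A → a ∈ closure (Xin \ A) := by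
    intro a ha hai
    have h1 : a ∈ closure Aᶜ := by rwa [closure_compl]
    rw [mem_closure_iff_nhds] at h1 ⊢
    intro t ht
    obtain ⟨z, ⟨hzt, hzX⟩, hzA⟩ :=
      h1 (t ∩ interior Xin) (inter_mem ht (isOpen_interior.mem_nhds (hAint ha)))
    exact ⟨z, hzt, interior_subset hzX, hzA⟩
  have hclosed : IsClosed (N '' A) := (hAcomp.image hN).isClosed
  have hfrN : frontier (N '' A) ⊆ Xs := by
    rintro _ hy
    obtain ⟨a, ha, rfl⟩ := hclosed.frontier_subset hy
    refine hbound ⟨a, hfr a ha fun hai => hy.2 ?_, rfl⟩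
    obtain ⟨r, hr, hrA⟩ := nhds_basis_closedBall.mem_iff.1 (mem_interior_iff_mem_nhds.1 hai)
    exact mem_interior_iff_mem_nhds.2 (mem_of_superset
      (image_closedBall_mem_nhds hr hN.continuousOn (hinj.mono hrA)) (image_mono hrA))
  rintro _ ⟨x, hx, rfl⟩
  by_cases hxA : x ∈ A
  · by_contra hxs
    apply hunb
    refine (hAcomp.image hN).isBounded.subset ?_
    by_contra hsub
    obtain ⟨z, hz, hzA⟩ := not_subset.1 hsub
    have hint : ∀ w ∈ Xsᶜ, w ∈ N '' A → w ∈ interior (N '' A) := fun w hw hwA => by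
      by_contra hwi
      exact hw (hfrN ⟨subset_closure hwA, hwi⟩)
    obtain ⟨w, -, hwi, hwA⟩ := hconn.isPreconnected _ _ isOpen_interior hclosed.isOpen_compl
      (fun w hw => or_iff_not_imp_right.2 fun hwA => hint w hw (not_not.1 hwA))
      ⟨N x, hxs, hint _ hxs (mem_image_of_mem N hxA)⟩ ⟨z, hz, hzA⟩
    exact hwA (interior_subset hwi)
  · exact hbound ⟨x, subset_closure ⟨hx, hxA⟩, rfl⟩
end

section
/- Let N : ℝⁿ → ℝⁿ be continuous, let X_in ⊆ ℝⁿ be compact, and let A ⊆ X_in be a compact subset with A ∩ ∂X_in = ∅ on which N is injective. Then the boundary of the output reachable set of X_in is contained in the image of closure(X_in \ A), i.e. ∂(N''(X_in)) ⊆ N''(closure(X_in \ A)). -/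
/-!
The theorem reduces to invariance of domain. If `N x` with `x ∈ Xin` is a frontier point of
`N '' Xin` and `x ∉ closure (Xin \ A)`, then `x ∈ A`, so `x` is interior to `Xin` and hence to `A`.
As `N` is continuous and injective on `A`, invariance of domain (`image_mem_nhds_of_injOn`) makes
`N x` an interior point of `N '' A ⊆ N '' Xin`, a contradiction.

Invariance of domain is deduced from a form of Brouwer's theorem (`exists_zero_of_near_id`: a
continuous map within `1 / 2` of the identity on the unit ball has a zero there), following Kulpa
and Tao. A continuous inverse `G` of `f` on the compact set `f '' closedBall 0 1` has a zero only at
`f 0`. If `f 0` were not interior to the image, one could pick a point `c` near `f 0` outside the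
image, push the image off the `ε`-ball around `c` radially, and replace `G` by a `C¹` map `P` that
vanishes neither on the far part of the image (where `G` is bounded below) nor on the sphere
`sphere c ε` (whose `C¹` image is null, so a small translation suffices). Then `P ∘ Φ ∘ f`, with
`Φ` the radial push, is close to the identity and has no zero.

The Brouwer statement is proved analytically, in the spirit of Milnor and Rogers. Let `u` be `C¹`
with support in a ball `B`, and let `p` be a polynomial function. For small `t > 0` the map
`x ↦ x + t • u x` is a bijection of `B` with positive Jacobian, so the change of variables formula
gives `∫_B det (1 + t • Du) * p (x + t • u x) = ∫_B p`. The left-hand side is a polynomial in `t`,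
so the identity persists at `t = 1` (`integral_eq`). If `x + u x` never vanished, taking
`p = (1 - s * ∑ yᵢ²) ^ m`, which concentrates at the origin as `m → ∞`, would make the left-hand
side negligible compared with the right-hand side (`exists_zero_of_smooth`).
-/

namespace IOD

/-! ### Polynomial dependence on a parameter -/

/-- Lagrange interpolation with nodes in `(0, δ]`: the value at `1` of a polynomial of degree at most
`d` is a fixed combination, with weights summing to `1`, of its values at the nodes. Applied under
an integral sign, it extends identities from small parameters to the parameter `1` without any
regularity of the coefficients. -/
lemma interp (d : ℕ) {δ : ℝ} (hδ : 0 < δ) : ∃ (τ w : ℕ → ℝ), (∀ i ∈ Finset.range (d+1), τ i ∈ Set.Ioc 0 δ) ∧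
    (∑ i ∈ Finset.range (d+1), w i = 1) ∧
    ∀ P : Polynomial ℝ, P.natDegree ≤ d →
      P.eval 1 = ∑ i ∈ Finset.range (d+1), P.eval (τ i) * w i := by
  let τ : ℕ → ℝ := fun i ↦ δ / (i + 1)
  have hτ : Set.InjOn τ (Finset.range (d+1)) := by
    intro i _ j _ h
    have h' : δ / ((i:ℝ) + 1) = δ / ((j:ℝ) + 1) := h
    have hi : (i:ℝ) + 1 ≠ 0 := by positivity
    have hj : (j:ℝ) + 1 ≠ 0 := by positivity
    rw [div_eq_div_iff hi hj] at h'
    exact_mod_cast (add_right_cancel (mul_left_cancel₀ hδ.ne' h')).symm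
  refine ⟨τ, fun i ↦ (Lagrange.basis (Finset.range (d+1)) τ i).eval 1, ?_, ?_, ?_⟩
  · intro i _
    refine ⟨by positivity, div_le_self hδ.le ?_⟩
    have : (0:ℝ) ≤ i := by positivity
    linarith
  · rw [← Polynomial.eval_finsetSum, Lagrange.sum_basis hτ (by simp), Polynomial.eval_one]
  · intro P hP
    have hdeg : P.degree < (Finset.range (d+1)).card := by
      rw [Finset.card_range]
      exact lt_of_le_of_lt Polynomial.degree_le_natDegree (by exact_mod_cast Nat.lt_succ_of_le hP)
    conv_lhs => rw [Lagrange.eq_interpolate hτ hdeg]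
    simp [Lagrange.interpolate_apply, Polynomial.eval_finsetSum]

lemma det_poly {n : ℕ} (A : (Fin n → ℝ) →L[ℝ] (Fin n → ℝ)) : ∃ P : Polynomial ℝ, P.natDegree ≤ n ∧
    ∀ t : ℝ, (ContinuousLinearMap.id ℝ (Fin n → ℝ) + t • A).det = P.eval t := by
  refine ⟨((Polynomial.X : Polynomial ℝ) • (LinearMap.toMatrix' (A : (Fin n → ℝ) →ₗ[ℝ] (Fin n → ℝ))).map Polynomial.C
    + (1 : Matrix (Fin n) (Fin n) ℝ).map Polynomial.C).det, ?_, ?_⟩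
  · simpa using Polynomial.natDegree_det_X_add_C_le (LinearMap.toMatrix' (A : (Fin n → ℝ) →ₗ[ℝ] (Fin n → ℝ))) 1
  · intro t
    rw [← Polynomial.coe_evalRingHom, RingHom.map_det, ContinuousLinearMap.det, ← LinearMap.det_toMatrix']
    congr 1
    ext i j
    by_cases hij : i = j <;> simp [LinearMap.toMatrix'_apply, hij, add_comm] <;> ring

open MeasureTheory Set Metric

variable {n : ℕ}

/-! ### The change of variables identity -/

lemma bijective_of_small (u : (Fin n → ℝ) → (Fin n → ℝ)) {L : NNReal} (hu : LipschitzWith L u) {t : ℝ} (ht : 0 ≤ t)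
    (htL : t * L < 1) : Function.Bijective (fun x ↦ x + t • u x) := by
  have happ : ApproximatesLinearOn (fun x ↦ x + t • u x)
      ((ContinuousLinearEquiv.refl ℝ (Fin n → ℝ) : (Fin n → ℝ) ≃L[ℝ] (Fin n → ℝ)) : (Fin n → ℝ) →L[ℝ] (Fin n → ℝ))
      univ (t.toNNReal * L) := by
    intro x _ y _
    have h1 : x + t • u x - (y + t • u y) - (x - y) = t • (u x - u y) := by
      rw [smul_sub]; abel
    have h2 := hu.norm_sub_le x y
    simp only [ContinuousLinearEquiv.coe_refl, ContinuousLinearMap.id_apply, NNReal.coe_mul, Real.coe_toNNReal t ht]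
    rw [h1, norm_smul, Real.norm_of_nonneg ht, mul_assoc]
    gcongr
  have hc : Subsingleton (Fin n → ℝ) ∨ t.toNNReal * L <
      ‖((ContinuousLinearEquiv.refl ℝ (Fin n → ℝ)).symm : (Fin n → ℝ) →L[ℝ] (Fin n → ℝ))‖₊⁻¹ := by
    rcases subsingleton_or_nontrivial (Fin n → ℝ) with h | h
    · exact Or.inl h
    · right
      have : ‖((ContinuousLinearEquiv.refl ℝ (Fin n → ℝ)).symm : (Fin n → ℝ) →L[ℝ] (Fin n → ℝ))‖₊ = 1 := by
        ext
        simp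
      rw [this, inv_one, ← NNReal.coe_lt_coe]
      simpa [Real.coe_toNNReal t ht] using htL
  refine ⟨?_, happ.surjective hc⟩
  intro x y hxy
  have := happ.injective hc
  exact congrArg Subtype.val (@this ⟨x, mem_univ _⟩ ⟨y, mem_univ _⟩ hxy)

/-- For small `t > 0`, the map `x ↦ x + t • u x` permutes the ball, so the change of variables
formula applies with a positive Jacobian determinant. -/
lemma small_t (u : (Fin n → ℝ) → (Fin n → ℝ)) (hu : ContDiff ℝ 1 u) {R : ℝ}
    (hR : ∀ x ∉ closedBall (0 : Fin n → ℝ) R, u x = 0) (p : (Fin n → ℝ) → ℝ) :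
    ∃ δ > 0, ∀ t ∈ Ioc (0:ℝ) δ,
      ∫ x in closedBall (0 : Fin n → ℝ) R,
        (ContinuousLinearMap.id ℝ (Fin n → ℝ) + t • fderiv ℝ u x).det * p (x + t • u x) =
      ∫ x in closedBall (0 : Fin n → ℝ) R, p x := by
  have hcs : HasCompactSupport u := HasCompactSupport.intro (isCompact_closedBall 0 R) hR
  obtain ⟨L, hL⟩ := hu.lipschitzWith_of_hasCompactSupport hcs (by simp)
  -- the determinant stays positive near the identity
  have hdet : ∀ᶠ A in nhds (ContinuousLinearMap.id ℝ (Fin n → ℝ)), 0 < A.det := by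
    refine ContinuousLinearMap.continuous_det.continuousAt.eventually (lt_mem_nhds ?_)
    simp [ContinuousLinearMap.det]
  obtain ⟨η, hη, hdet⟩ := Metric.eventually_nhds_iff.1 hdet
  refine ⟨min 1 η / (2 * (L + 1)), by positivity, fun t ht ↦ ?_⟩
  have ht0 : 0 ≤ t := ht.1.le
  have htL : t * L < min 1 η := by
    have h1 := ht.2
    rw [le_div_iff₀ (by positivity)] at h1
    have : 0 ≤ t * L := by positivity
    have := ht.1
    nlinarith
  set g : (Fin n → ℝ) → (Fin n → ℝ) := fun x ↦ x + t • u x with hg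
  have hbij : Function.Bijective g := bijective_of_small u hL ht0 (htL.trans_le (min_le_left _ _))
  have hout : ∀ x ∉ closedBall (0 : Fin n → ℝ) R, g x = x := fun x hx ↦ by simp [hg, hR x hx]
  have himg : g '' closedBall 0 R = closedBall 0 R := by
    apply Subset.antisymm
    · rintro _ ⟨x, hx, rfl⟩
      by_contra h
      exact h (by rwa [hbij.1 (hout _ h)])
    · intro y hy
      obtain ⟨x, rfl⟩ := hbij.2 y
      refine ⟨x, ?_, rfl⟩
      by_contra h
      rw [hout x h] at hy
      exact h hy
  have hder : ∀ x, HasFDerivAt g (ContinuousLinearMap.id ℝ (Fin n → ℝ) + t • fderiv ℝ u x) x := fun x ↦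
    (hasFDerivAt_id x).add (((hu.differentiable (by simp)) x).hasFDerivAt.const_smul t)
  have key := integral_image_eq_integral_abs_det_fderiv_smul volume
    (isClosed_closedBall (x := (0 : Fin n → ℝ)) (ε := R)).measurableSet
    (fun x _ ↦ (hder x).hasFDerivWithinAt) hbij.1.injOn p
  rw [himg] at key
  rw [key]
  congr 1
  ext x
  have hpos : 0 < (ContinuousLinearMap.id ℝ (Fin n → ℝ) + t • fderiv ℝ u x).det := by
    apply hdet
    rw [dist_eq_norm, add_sub_cancel_left, norm_smul, Real.norm_of_nonneg ht0]
    calc t * ‖fderiv ℝ u x‖ ≤ t * L := by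
          gcongr
          exact norm_fderiv_le_of_lipschitz ℝ hL
      _ < η := htL.trans_le (min_le_right _ _)
  rw [abs_of_pos hpos, smul_eq_mul]

/-- The change of variables identity for `x ↦ x + u x`, without injectivity, for weights `p` that
are polynomial along lines. Both sides agree for `x ↦ x + t • u x` with `t` small, and the left-hand
side is polynomial in `t`. -/
lemma integral_eq (u : (Fin n → ℝ) → (Fin n → ℝ)) (hu : ContDiff ℝ 1 u) {R : ℝ}
    (hR : ∀ x ∉ closedBall (0 : Fin n → ℝ) R, u x = 0) (p : (Fin n → ℝ) → ℝ) (hp : Continuous p) (d : ℕ)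
    (hpoly : ∀ x v, ∃ P : Polynomial ℝ, P.natDegree ≤ d ∧ ∀ t : ℝ, p (x + t • v) = P.eval t) :
    ∫ x in closedBall (0 : Fin n → ℝ) R,
        (ContinuousLinearMap.id ℝ (Fin n → ℝ) + fderiv ℝ u x).det * p (x + u x) =
      ∫ x in closedBall (0 : Fin n → ℝ) R, p x := by
  obtain ⟨δ, hδ, hsmall⟩ := small_t u hu hR p
  obtain ⟨τ, w, hτ, hw, hinterp⟩ := interp (n + d) hδ
  let F : ℝ → (Fin n → ℝ) → ℝ := fun t x ↦
    (ContinuousLinearMap.id ℝ (Fin n → ℝ) + t • fderiv ℝ u x).det * p (x + t • u x)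
  have hFc : ∀ t, Continuous (F t) := fun t ↦ by
    have := hu.continuous
    have h2 := hu.continuous_fderiv (by simp)
    refine (ContinuousLinearMap.continuous_det.comp (by fun_prop)).mul (by fun_prop)
  have hFi : ∀ t, IntegrableOn (F t) (closedBall 0 R) := fun t ↦
    (hFc t).continuousOn.integrableOn_compact (isCompact_closedBall 0 R)
  have hF : ∀ x, F 1 x = ∑ i ∈ Finset.range (n + d + 1), F (τ i) x * w i := by
    intro x
    obtain ⟨P, hP, hP'⟩ := det_poly (fderiv ℝ u x)
    obtain ⟨Q, hQ, hQ'⟩ := hpoly x (u x)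
    have := hinterp (P * Q) (Polynomial.natDegree_mul_le.trans (by omega))
    simpa only [Polynomial.eval_mul, ← hP', ← hQ'] using this
  calc _ = ∫ x in closedBall (0 : Fin n → ℝ) R, F 1 x := by simp [F]
    _ = ∑ i ∈ Finset.range (n + d + 1), (∫ x in closedBall (0 : Fin n → ℝ) R, F (τ i) x) * w i := by
      simp_rw [hF]
      rw [integral_finsetSum _ (fun i _ ↦ (hFi _).mul_const _)]
      simp_rw [integral_mul_const]
    _ = ∑ i ∈ Finset.range (n + d + 1), (∫ x in closedBall (0 : Fin n → ℝ) R, p x) * w i :=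
      Finset.sum_congr rfl fun i hi ↦ by rw [hsmall _ (hτ i hi)]
    _ = _ := by rw [← Finset.mul_sum, hw, mul_one]

/-! ### Existence of zeros -/

lemma poly_weight (s : ℝ) (m : ℕ) (x v : Fin n → ℝ) : ∃ P : Polynomial ℝ, P.natDegree ≤ m * 2 ∧
    ∀ t : ℝ, (1 - s * ∑ i, ((x + t • v) i) ^ 2) ^ m = P.eval t := by
  refine ⟨(1 - Polynomial.C s * ∑ i, (Polynomial.C (x i) + Polynomial.C (v i) * Polynomial.X) ^ 2) ^ m, ?_, ?_⟩
  · refine Polynomial.natDegree_pow_le_of_le m ?_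
    refine (Polynomial.natDegree_sub_le_of_le (m := 0) (n := 2) (by simp) ?_).trans (by simp)
    refine (Polynomial.natDegree_C_mul_le _ _).trans ?_
    refine Polynomial.natDegree_sum_le_of_forall_le _ _ fun i _ ↦ ?_
    refine (Polynomial.natDegree_pow_le_of_le (m := 1) 2 ?_)
    compute_degree
  · intro t
    simp only [Polynomial.eval_pow, Polynomial.eval_sub, Polynomial.eval_one, Polynomial.eval_mul,
      Polynomial.eval_C, Polynomial.eval_finsetSum, Polynomial.eval_add, Polynomial.eval_X,
      Pi.add_apply, Pi.smul_apply, smul_eq_mul, mul_comm]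

/-- A `C¹` map that is the identity outside a ball has a zero. Otherwise the weights
`(1 - M⁻¹ * ∑ yᵢ²) ^ m` violate `integral_eq` for large `m`. -/
lemma exists_zero_of_smooth (u : (Fin n → ℝ) → (Fin n → ℝ)) (hu : ContDiff ℝ 1 u) {R : ℝ} (hR0 : 0 < R)
    (hR : ∀ x ∉ closedBall (0 : Fin n → ℝ) R, u x = 0) : ∃ x, x + u x = 0 := by
  by_contra! hne
  let B := closedBall (0 : Fin n → ℝ) R
  have hB : IsCompact B := isCompact_closedBall 0 R
  let q : (Fin n → ℝ) → ℝ := fun y ↦ ∑ i, y i ^ 2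
  have hq : Continuous q := by fun_prop
  have hq0 : ∀ y, 0 ≤ q y := fun y ↦ Finset.sum_nonneg fun i _ ↦ sq_nonneg _
  let h : (Fin n → ℝ) → (Fin n → ℝ) := fun x ↦ x + u x
  have hh : Continuous h := continuous_id.add hu.continuous
  let D : (Fin n → ℝ) → ℝ := fun x ↦ (ContinuousLinearMap.id ℝ (Fin n → ℝ) + fderiv ℝ u x).det
  have hD : Continuous D := by
    have h2 := hu.continuous_fderiv (by simp)
    exact ContinuousLinearMap.continuous_det.comp (by fun_prop)
  -- lower bound for `q ∘ h`
  obtain ⟨ε, hε, hεq⟩ : ∃ ε > 0, ∀ x ∈ B, ε ≤ q (h x) := by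
    obtain ⟨x₀, _, hmin⟩ := hB.exists_isMinOn ⟨0, by simp [B, hR0.le]⟩ (hq.comp hh).continuousOn
    refine ⟨q (h x₀), lt_of_le_of_ne (hq0 _) fun h0 ↦ hne x₀ ?_, fun x hx ↦ hmin hx⟩
    ext i
    have := (Finset.sum_eq_zero_iff_of_nonneg (fun i _ ↦ sq_nonneg (h x₀ i))).1 h0.symm i (Finset.mem_univ _)
    exact pow_eq_zero_iff two_ne_zero |>.1 this
  obtain ⟨C, hC⟩ := hB.exists_bound_of_continuousOn hD.continuousOn
  obtain ⟨M₁, hM₁⟩ := hB.exists_bound_of_continuousOn hq.continuousOn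
  obtain ⟨M₂, hM₂⟩ := hB.exists_bound_of_continuousOn (hq.comp hh).continuousOn
  let M := max 1 (max M₁ M₂)
  have hM : 0 < M := lt_max_of_lt_left one_pos
  have hqM : ∀ x ∈ B, q x ≤ M := fun x hx ↦
    (le_abs_self _).trans ((hM₁ x hx).trans ((le_max_left _ _).trans (le_max_right _ _)))
  have hqhM : ∀ x ∈ B, q (h x) ≤ M := fun x hx ↦
    (le_abs_self _).trans ((hM₂ x hx).trans ((le_max_right _ _).trans (le_max_right _ _)))
  have hεM : ε ≤ M := (hεq 0 (by simp [B, hR0.le])).trans (hqhM 0 (by simp [B, hR0.le]))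
  let p : ℕ → (Fin n → ℝ) → ℝ := fun m y ↦ (1 - M⁻¹ * q y) ^ m
  have hp : ∀ m, Continuous (p m) := fun m ↦ by fun_prop
  have hs : ∀ c ≤ M, 0 ≤ 1 - M⁻¹ * c := fun c hc ↦ by
    rw [sub_nonneg, inv_mul_le_one₀ hM]; exact hc
  have heq : ∀ m, ∫ x in B, D x * p m (h x) = ∫ x in B, p m x := fun m ↦
    integral_eq u hu hR (p m) (hp m) (m * 2) (poly_weight M⁻¹ m)
  -- upper bound of the left-hand side
  have hup : ∀ m, ∫ x in B, D x * p m (h x) ≤ C * (1 - M⁻¹ * ε) ^ m * volume.real B := by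
    intro m
    refine (Real.le_norm_self _).trans ?_
    refine norm_setIntegral_le_of_norm_le_const hB.measure_lt_top fun x hx ↦ ?_
    have h1 := hs _ (hqhM x hx)
    rw [norm_mul, Real.norm_of_nonneg (show 0 ≤ p m (h x) from pow_nonneg h1 m)]
    refine mul_le_mul (hC x hx) ?_ (pow_nonneg h1 m) ((norm_nonneg _).trans (hC x hx))
    refine pow_le_pow_left₀ h1 ?_ m
    have := hεq x hx
    gcongr
  -- lower bound of the right-hand side
  let V : Set (Fin n → ℝ) := ball 0 R ∩ {y | q y < ε / 2}
  have hVo : IsOpen V := isOpen_ball.inter (isOpen_lt hq continuous_const)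
  have hVB : V ⊆ B := fun x hx ↦ ball_subset_closedBall hx.1
  have hVpos : 0 < volume.real V := by
    refine ENNReal.toReal_pos (hVo.measure_pos volume ⟨0, by simp [hR0], ?_⟩).ne'
      ((measure_mono hVB).trans_lt hB.measure_lt_top).ne
    simpa [q] using hε
  have hlow : ∀ m, (1 - M⁻¹ * (ε / 2)) ^ m * volume.real V ≤ ∫ x in B, p m x := by
    intro m
    have hi : IntegrableOn (p m) B := (hp m).continuousOn.integrableOn_compact hB
    calc (1 - M⁻¹ * (ε / 2)) ^ m * volume.real V = ∫ x in V, (1 - M⁻¹ * (ε / 2)) ^ m := by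
          simp [mul_comm]
      _ ≤ ∫ x in V, p m x := by
          refine setIntegral_mono_on ?_ (hi.mono_set hVB) hVo.measurableSet fun x hx ↦ ?_
          · exact integrableOn_const ((measure_mono hVB).trans_lt hB.measure_lt_top).ne
          · refine pow_le_pow_left₀ (hs _ (by linarith)) ?_ m
            have : q x < ε / 2 := hx.2
            gcongr
      _ ≤ ∫ x in B, p m x := by
          refine setIntegral_mono_set hi ?_ hVB.eventuallyLE
          filter_upwards [ae_restrict_mem hB.measurableSet] with x hx
          exact pow_nonneg (hs _ (hqM x hx)) m
  let a := 1 - M⁻¹ * ε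
  let b := 1 - M⁻¹ * (ε / 2)
  have ha : 0 ≤ a := hs _ hεM
  have hab : a < b := by
    have : 0 < M⁻¹ * ε := by positivity
    simp only [a, b]; linarith
  have hb : 0 < b := ha.trans_lt hab
  have hlim : Filter.Tendsto (fun m : ℕ ↦ C * volume.real B * (a / b) ^ m) Filter.atTop (nhds 0) := by
    simpa using (tendsto_pow_atTop_nhds_zero_of_lt_one (div_nonneg ha hb.le)
      ((div_lt_one hb).2 hab)).const_mul (C * volume.real B)
  obtain ⟨m, hm⟩ := (hlim.eventually (gt_mem_nhds hVpos)).exists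
  have h1 := (hlow m).trans ((heq m).symm.le.trans (hup m))
  have hbm : 0 < b ^ m := pow_pos hb m
  rw [div_pow, mul_div_assoc', div_lt_iff₀ hbm] at hm
  change b ^ m * _ ≤ C * a ^ m * _ at h1
  linarith

/-- A form of Brouwer's fixed point theorem: a continuous perturbation of the identity by at most
`1 / 2` on the unit ball has a zero there. The perturbation is smoothed, then cut off near the unit
sphere, where the identity dominates it. -/
lemma exists_zero_of_near_id (v : (Fin n → ℝ) → (Fin n → ℝ)) (hv : Continuous v)
    (hb : ∀ x ∈ closedBall (0 : Fin n → ℝ) 1, ‖v x‖ ≤ 1 / 2) :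
    ∃ x ∈ closedBall (0 : Fin n → ℝ) 1, x + v x = 0 := by
  by_contra! hne
  have hB : IsCompact (closedBall (0 : Fin n → ℝ) 1) := isCompact_closedBall 0 1
  obtain ⟨δ, hδ, hδv⟩ : ∃ δ > 0, ∀ x ∈ closedBall (0 : Fin n → ℝ) 1, δ ≤ ‖x + v x‖ := by
    obtain ⟨x₀, hx₀, hmin⟩ := hB.exists_isMinOn ⟨0, by simp⟩
      (continuous_id.add hv).norm.continuousOn
    exact ⟨‖x₀ + v x₀‖, norm_pos_iff.2 (hne x₀ hx₀), fun x hx ↦ hmin hx⟩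
  obtain ⟨w, hw, hwv, -⟩ := hv.exists_contDiff_approx 1 (ε := fun _ ↦ min δ (1 / 4))
    continuous_const (fun _ ↦ by positivity)
  let χ : ContDiffBump (0 : Fin n → ℝ) := ⟨7 / 8, 1, by norm_num, by norm_num⟩
  obtain ⟨x, hx⟩ := exists_zero_of_smooth (fun x ↦ χ x • w x)
    ((χ.contDiff (n := 1)).smul (by exact_mod_cast hw)) one_pos (fun x hx ↦ by
      rw [χ.zero_of_le_dist (le_of_lt (by simpa [χ] using hx)), zero_smul])
  have hwx := hwv x
  rw [dist_eq_norm] at hwx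
  by_cases h1 : 1 ≤ ‖x‖
  · rw [χ.zero_of_le_dist (by simpa [χ] using h1), zero_smul, add_zero] at hx
    norm_num [hx] at h1
  push Not at h1
  have hxB : x ∈ closedBall (0 : Fin n → ℝ) 1 := by simpa using h1.le
  by_cases h2 : ‖x‖ ≤ 7 / 8
  · rw [χ.one_of_mem_closedBall (by simpa [χ] using h2), one_smul] at hx
    have h3 := hδv x hxB
    have h4 : x + v x = -(w x - v x) := by
      rw [← sub_eq_zero, ← hx]; abel
    rw [h4, norm_neg] at h3
    exact absurd (hwx.trans_le (min_le_left _ _)) (not_lt.2 h3)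
  · have h3 : ‖x‖ = χ x * ‖w x‖ := by
      have := congrArg norm (eq_neg_of_add_eq_zero_left hx)
      rwa [norm_neg, norm_smul, Real.norm_of_nonneg χ.nonneg] at this
    have h4 : ‖w x‖ ≤ 3 / 4 := by
      have := norm_le_norm_add_norm_sub (v x) (w x)
      have := hb x hxB
      have := hwx.trans_le (min_le_right _ _)
      have e := norm_sub_rev (v x) (w x)
      linarith
    have h5 : χ x * ‖w x‖ ≤ 1 * ‖w x‖ := by gcongr; exact χ.le_one
    linarith

/-! ### Invariance of domain -/

/-- Invariance of domain at the centre of the unit ball. -/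
lemma mem_interior_image_unit (f : (Fin n → ℝ) → (Fin n → ℝ)) (hf : Continuous f)
    (hinj : InjOn f (closedBall 0 1)) : f 0 ∈ interior (f '' closedBall 0 1) := by
  by_contra h_not_int
  let K := closedBall (0 : Fin n → ℝ) 1
  have hK : IsCompact K := isCompact_closedBall 0 1
  have h0K : (0 : Fin n → ℝ) ∈ K := by simp [K]
  have : CompactSpace K := isCompact_iff_compactSpace.1 hK
  -- a continuous extension of the inverse of `f` on `f '' K`
  have hemb : Topology.IsClosedEmbedding (K.domRestrict f) :=
    (hf.comp continuous_subtype_val).isClosedEmbedding (injOn_iff_injective.1 hinj)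
  obtain ⟨G, hG⟩ := ContinuousMap.exists_extension' hemb
    (⟨Subtype.val, continuous_subtype_val⟩ : C(K, Fin n → ℝ))
  have hGf : ∀ x ∈ K, G (f x) = x := fun x hx ↦ congrFun hG ⟨x, hx⟩
  have hfK : IsCompact (f '' K) := hK.image hf
  obtain ⟨ρ, hρ, hGρ⟩ : ∃ ρ > 0, ∀ y, dist y (f 0) < ρ → ‖G y‖ < 1 / 10 := by
    obtain ⟨ρ, hρ, h⟩ := Metric.continuousAt_iff.1 (G.continuous.continuousAt (x := f 0)) (1 / 10) (by norm_num)
    refine ⟨ρ, hρ, fun y hy ↦ ?_⟩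
    have := h hy
    rwa [hGf 0 h0K, dist_zero_right] at this
  let ε := ρ / 3
  have hε : 0 < ε := by positivity
  obtain ⟨c, hcε, hcK⟩ : ∃ c, dist c (f 0) < ε ∧ c ∉ f '' K := by
    by_contra! hcon
    exact h_not_int (mem_interior_iff_mem_nhds.2 (Filter.mem_of_superset (ball_mem_nhds _ hε) hcon))
  -- away from `c`, the map `G` does not vanish on `f '' K`
  have h_far : IsCompact (f '' K ∩ {y | ε ≤ ‖y - c‖}) :=
    hfK.inter_right (isClosed_le continuous_const (by fun_prop))
  have hGne : ∀ y ∈ f '' K ∩ {y | ε ≤ ‖y - c‖}, G y ≠ 0 := by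
    rintro _ ⟨⟨x, hx, rfl⟩, hy⟩ h
    rw [hGf x hx] at h
    subst h
    rw [dist_comm, dist_eq_norm] at hcε
    exact absurd hcε (not_lt.2 hy)
  obtain ⟨δ, hδ, hδG⟩ : ∃ δ > 0, ∀ y ∈ f '' K ∩ {y | ε ≤ ‖y - c‖}, δ ≤ ‖G y‖ := by
    rcases (f '' K ∩ {y | ε ≤ ‖y - c‖}).eq_empty_or_nonempty with h | h
    · exact ⟨1, one_pos, by simp [h]⟩
    · obtain ⟨y₀, hy₀, hmin⟩ := h_far.exists_isMinOn h G.continuous.norm.continuousOn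
      exact ⟨‖G y₀‖, norm_pos_iff.2 (hGne y₀ hy₀), fun y hy ↦ hmin hy⟩
  let η := min δ (1 / 10) / 2
  have hη : 0 < η := by positivity
  obtain ⟨P₀, hP₀, hP₀G, -⟩ := G.continuous.exists_contDiff_approx 1 (ε := fun _ ↦ η)
    continuous_const (fun _ ↦ hη)
  -- a small translation moves the null set `P₀ '' sphere c ε` off the origin
  obtain ⟨b, hb, hbS⟩ : ∃ b ∈ ball (0 : Fin n → ℝ) η, b ∉ P₀ '' sphere c ε := by
    by_contra! hcon
    have h0 : volume (P₀ '' sphere c ε) = 0 :=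
      addHaar_image_eq_zero_of_differentiableOn_of_addHaar_eq_zero volume
        (hP₀.differentiable (by simp)).differentiableOn (Measure.addHaar_sphere_of_ne_zero volume c hε.ne')
    exact (measure_ball_pos volume (0 : Fin n → ℝ) hη).ne' (measure_mono_null hcon h0)
  let P : (Fin n → ℝ) → (Fin n → ℝ) := fun y ↦ P₀ y - b
  have hPc : Continuous P := hP₀.continuous.sub continuous_const
  have hPG : ∀ y, ‖P y - G y‖ < min δ (1 / 10) := by
    intro y
    have h1 := hP₀G y
    rw [dist_eq_norm] at h1
    have h2 : ‖b‖ < η := by simpa using hb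
    have h3 : P y - G y = (P₀ y - G y) - b := by simp only [P]; abel
    have h4 := norm_sub_le (P₀ y - G y) b
    have h5 : η + η = min δ (1 / 10) := add_halves _
    rw [h3]; linarith
  -- `Φ` pushes the points near `c` radially onto the sphere
  let Φ : (Fin n → ℝ) → (Fin n → ℝ) := fun y ↦ c + max (ε / ‖y - c‖) 1 • (y - c)
  have hfc : ∀ x ∈ K, 0 < ‖f x - c‖ := fun x hx ↦
    norm_pos_iff.2 (sub_ne_zero.2 fun h ↦ hcK ⟨x, hx, h⟩)
  have hΦfar : ∀ y, ε ≤ ‖y - c‖ → Φ y = y := fun y hy ↦ by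
    simp only [Φ]
    rw [max_eq_right ((div_le_one (hε.trans_le hy)).2 hy), one_smul]; abel
  have hΦnear : ∀ y, 0 < ‖y - c‖ → ‖y - c‖ < ε → ‖Φ y - c‖ = ε := fun y hy0 hy ↦ by
    simp only [Φ]
    rw [max_eq_left ((one_le_div hy0).2 hy.le), add_sub_cancel_left, norm_smul,
      Real.norm_of_nonneg (by positivity), div_mul_cancel₀ _ hy0.ne']
  have hHc : ContinuousOn (fun x ↦ P (Φ (f x)) - x) K := by
    refine (hPc.comp_continuousOn ?_).sub continuousOn_id
    have hdiv : ContinuousOn (fun x ↦ ε / ‖f x - c‖) K :=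
      continuousOn_const.div (by fun_prop) fun x hx ↦ (hfc x hx).ne'
    change ContinuousOn (fun x ↦ c + max (ε / ‖f x - c‖) 1 • (f x - c)) K
    fun_prop
  obtain ⟨v, hv⟩ := ContinuousMap.exists_restrict_eq (isClosed_closedBall (x := (0 : Fin n → ℝ)) (ε := 1))
    ⟨K.domRestrict fun x ↦ P (Φ (f x)) - x, hHc.domRestrict⟩
  have hvx : ∀ x ∈ K, v x = P (Φ (f x)) - x := fun x hx ↦ congrArg (fun g ↦ g ⟨x, hx⟩) hv
  obtain ⟨x, hx, hx0⟩ := exists_zero_of_near_id v v.continuous (by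
    intro x hx
    rw [hvx x hx]
    rcases le_or_gt ε ‖f x - c‖ with h | h
    · rw [hΦfar _ h]
      have := (hPG (f x)).trans_le (min_le_right _ _)
      rw [hGf x hx] at this
      linarith
    · have h1 := hΦnear _ (hfc x hx) h
      have h2 : dist (Φ (f x)) (f 0) < ρ := by
        have := dist_triangle (Φ (f x)) c (f 0)
        rw [dist_eq_norm (Φ (f x)) c, h1] at this
        have e : ρ = 3 * ε := by simp only [ε]; ring
        linarith
      have h3 : dist (f x) (f 0) < ρ := by
        have := dist_triangle (f x) c (f 0)
        rw [dist_eq_norm (f x) c] at this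
        have e : ρ = 3 * ε := by simp only [ε]; ring
        linarith
      have h4 := hGρ _ h2
      have h5 := hGρ _ h3
      rw [hGf x hx] at h5
      have h6 := (hPG (Φ (f x))).trans_le (min_le_right _ _)
      have h7 : P (Φ (f x)) - x = (P (Φ (f x)) - G (Φ (f x))) + G (Φ (f x)) - x := by abel
      have h8 := norm_sub_le ((P (Φ (f x)) - G (Φ (f x))) + G (Φ (f x))) x
      have h9 := norm_add_le (P (Φ (f x)) - G (Φ (f x))) (G (Φ (f x)))
      rw [h7]; linarith)
  rw [hvx x hx, add_sub_cancel] at hx0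
  rcases le_or_gt ε ‖f x - c‖ with h | h
  · rw [hΦfar _ h] at hx0
    have h1 := (hPG (f x)).trans_le (min_le_left _ _)
    rw [hx0, zero_sub, norm_neg] at h1
    exact absurd h1 (not_lt.2 (hδG _ ⟨⟨x, hx, rfl⟩, h⟩))
  · refine hbS ⟨Φ (f x), ?_, sub_eq_zero.1 hx0⟩
    rw [mem_sphere, dist_eq_norm]
    exact hΦnear _ (hfc x hx) h

/-- **Invariance of domain**, in pointwise form. -/
lemma image_mem_nhds_of_injOn (f : (Fin n → ℝ) → (Fin n → ℝ)) (hf : Continuous f)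
    {s : Set (Fin n → ℝ)} (hinj : InjOn f s) {a : Fin n → ℝ} (hs : s ∈ nhds a) :
    f '' s ∈ nhds (f a) := by
  obtain ⟨r, hr, hrs⟩ := Metric.nhds_basis_closedBall.mem_iff.1 hs
  have hmaps : MapsTo (fun x ↦ a + r • x) (closedBall 0 1) s := fun x hx ↦ by
    apply hrs
    rw [mem_closedBall, dist_eq_norm, add_sub_cancel_left, norm_smul, Real.norm_of_nonneg hr.le]
    have : ‖x‖ ≤ 1 := by simpa using hx
    nlinarith
  have h := mem_interior_image_unit (fun x ↦ f (a + r • x)) (by fun_prop) (by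
    intro x hx y hy hxy
    have := hinj (hmaps hx) (hmaps hy) hxy
    exact smul_right_injective _ hr.ne' (add_left_cancel this))
  simp only [smul_zero, add_zero] at h
  refine Filter.mem_of_superset (mem_interior_iff_mem_nhds.1 h) ?_
  rintro _ ⟨x, hx, rfl⟩
  exact ⟨_, hmaps hx, rfl⟩

end IOD

/-- If `N : ℝⁿ → ℝⁿ` is continuous, `X_in` is compact, and `A ⊆ X_in` is a
compact subset avoiding `∂X_in` on which `N` is injective, then the boundary of
the output reachable set of `X_in` is contained in the image of
`closure (X_in \ A)`. -/
theorem frontier_reachable_subset_image_closure_diff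
    {n : ℕ} (N : (Fin n → ℝ) → (Fin n → ℝ)) (hN : Continuous N)
    (Xin A : Set (Fin n → ℝ)) (hXin : IsCompact Xin)
    (hA : A ⊆ Xin) (hAcomp : IsCompact A) (hAfr : A ∩ frontier Xin = ∅)
    (hinj : Set.InjOn N A) :
    frontier (N '' Xin) ⊆ N '' closure (Xin \ A) := by
  rintro y ⟨hycl, hyint⟩
  obtain ⟨x, hx, rfl⟩ := (hXin.image hN).isClosed.closure_eq ▸ hycl
  by_contra hy
  have hxcl : x ∉ closure (Xin \ A) := fun h ↦ hy ⟨x, h, rfl⟩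
  have hxA : x ∈ A := by
    by_contra h
    exact hxcl (subset_closure ⟨hx, h⟩)
  have hxint : x ∈ interior Xin := by
    by_contra h
    have : x ∈ A ∩ frontier Xin := ⟨hxA, subset_closure hx, h⟩
    simp [hAfr] at this
  have hAx : A ∈ nhds x := by
    filter_upwards [mem_interior_iff_mem_nhds.1 hxint, isClosed_closure.isOpen_compl.mem_nhds hxcl]
      with z hz hz'
    by_contra h
    exact hz' (subset_closure ⟨hz, h⟩)
  exact hyint (mem_interior_iff_mem_nhds.2 (Filter.mem_of_superset
    (IOD.image_mem_nhds_of_injOn N hN hinj hAx) (Set.image_mono hA)))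
end

section
/- Let f : ℝᵐ → ℝⁿ be a continuous open map, let K ⊆ ℝᵐ be a compact input set, and let S ⊆ ℝⁿ be a set whose complement ℝⁿ \ S is connected and unbounded. If f''(∂K) ⊆ S, then f''(K) ⊆ S; that is, for open-map neural networks, performing reachability analysis only on the boundary of the input set soundly verifies safety of the entire input set. -/
/-! The open sets `f '' interior K` and `(f '' K)ᶜ` are disjoint, and since `f '' frontier K ⊆ S`
they cover `Sᶜ`. As `f '' K` is bounded and `Sᶜ` is not, `Sᶜ` meets `(f '' K)ᶜ`; being connected,
it cannot also meet `f '' interior K`. -/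

/-- Set-boundary safety verification for open-map networks: if `f : ℝᵐ → ℝⁿ` is
a continuous open map, `K ⊆ ℝᵐ` is compact, and the safe set `S ⊆ ℝⁿ` has
connected unbounded complement, then `f '' (∂K) ⊆ S` implies `f '' K ⊆ S`. -/
theorem safety_verification_openMap
    {m n : ℕ} (f : (Fin m → ℝ) → (Fin n → ℝ))
    (hcont : Continuous f) (hopen : IsOpenMap f)
    (K : Set (Fin m → ℝ)) (hK : IsCompact K)
    (S : Set (Fin n → ℝ))
    (hconn : IsConnected Sᶜ) (hunb : ¬ Bornology.IsBounded Sᶜ)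
    (hbound : f '' frontier K ⊆ S) :
    f '' K ⊆ S := by
  have hfK : IsCompact (f '' K) := hK.image hcont
  have hint : ∀ x ∈ K, f x ∈ Sᶜ → x ∈ interior K := by
    intro x hx hfx
    by_contra hxi
    exact hfx (hbound ⟨x, ⟨subset_closure hx, hxi⟩, rfl⟩)
  have hcover : Sᶜ ⊆ f '' interior K ∪ (f '' K)ᶜ := by
    intro y hy
    by_cases hyK : y ∈ f '' K
    · obtain ⟨x, hx, rfl⟩ := hyK
      exact Or.inl ⟨x, hint x hx hy, rfl⟩
    · exact Or.inr hyK
  have hV : (Sᶜ ∩ (f '' K)ᶜ).Nonempty := by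
    obtain ⟨y, hy, hyK⟩ := Set.not_subset.mp fun h => hunb (hfK.isBounded.subset h)
    exact ⟨y, hy, hyK⟩
  rintro _ ⟨x, hx, rfl⟩
  by_contra hfx
  obtain ⟨y, -, ⟨z, hz, rfl⟩, hy⟩ := hconn.isPreconnected _ _ (hopen _ isOpen_interior)
    hfK.isClosed.isOpen_compl hcover ⟨f x, hfx, x, hint x hx hfx, rfl⟩ hV
  exact hy ⟨z, interior_subset hz, rfl⟩
end
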